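/- arXiv:2205.06030 — 4 statements merged into one kernel-verified Lean document; each statement's English description precedes it below -/
import Mathlib

section
/- (Order–degree–height surface for common left multiples, shift case.) For ℓ = 1, …, n let L_ℓ = Σ_{i=0}^{r_ℓ} (a_{ℓ,i}·)∘S_x^i with a_{ℓ,i} ∈ C[x,y] not all zero, deg_x a_{ℓ,i} ≤ d_ℓ and deg_y a_{ℓ,i} ≤ h_ℓ for all i. Let r, d, h ∈ ℕ be such that r ≥ r_ℓ, d ≥ d_ℓ, h ≥ h_ℓ for all ℓ and (r+1)(d+1)(h+1) − (r+1)(d+1)·Σ_ℓ h_ℓ − (r+1)(h+1)·Σ_ℓ d_ℓ − (d+1)(h+1)·Σ_ℓ r_ℓ + (r+1)·Σ_ℓ d_ℓ h_ℓ + (d+1)·Σ_ℓ r_ℓ h_ℓ + (h+1)·Σ_ℓ r_ℓ d_ℓ − Σ_ℓ r_ℓ d_ℓ h_ℓ > 0. Then there exist c_0, …, c_r ∈ C[x,y], not all zero, with deg_x c_i ≤ d and deg_y c_i ≤ h, and for each ℓ polynomials m_{ℓ,0}, …, m_{ℓ,r−r_ℓ} ∈ C[x,y] with deg_x m_{ℓ,j}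 ≤ d − d_ℓ and deg_y m_{ℓ,j} ≤ h − h_ℓ, such that for every ℓ the identity Σ_{i=0}^{r} (c_i·)∘S_x^i = (Σ_{j=0}^{r−r_ℓ} (m_{ℓ,j}·)∘S_x^j) ∘ L_ℓ holds as C-linear endomorphisms of C[x,y]; in particular L_1, …, L_n have a nonzero common left multiple of order at most r, degree at most d, and height at most h. -/
open MvPolynomial

/-- The shift `S_x` on `C[x,y]`: the `C`-algebra endomorphism (in fact automorphism)
with `x ↦ x + 1` and `y ↦ y`. -/
noncomputable def shiftX (C : Type*) [CommRing C] :
    MvPolynomial (Fin 2) C →ₐ[C] MvPolynomial (Fin 2) C :=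
  aeval ![X 0 + 1, X 1]

/-!
A common left multiple is a solution of the linear system `c = m_ℓ L_ℓ` (`ℓ = 1, …, n`) in the
coefficients of `c` and of all the `m_ℓ`, the unknowns being the coefficients allowed by the bounds
on order, degree and height. Each of the `n` equations takes place in the space to which `c`
belongs, so there are `n (r+1)(d+1)(h+1)` scalar equations for
`(r+1)(d+1)(h+1) + Σ_ℓ (r-r_ℓ+1)(d-d_ℓ+1)(h-h_ℓ+1)` unknowns, and the inequality of the theorem says
exactly that the unknowns outnumber the equations. In a nontrivial solution `c` is nonzero, because
`m_ℓ L_ℓ = 0` forces `m_ℓ = 0`.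
-/

section LinearAlgebra

theorem exists_ne_zero_forall_mem_range {ι K V : Type*} {W : ι → Type*} [Fintype ι]
    [Ring K] [StrongRankCondition K] [AddCommGroup V] [Module K V] [Module.Free K V]
    [Module.Finite K V] [∀ ℓ, AddCommGroup (W ℓ)] [∀ ℓ, Module K (W ℓ)]
    [∀ ℓ, Module.Free K (W ℓ)] [∀ ℓ, Module.Finite K (W ℓ)] (f : ∀ ℓ, W ℓ →ₗ[K] V)
    (hf : ∀ ℓ, Function.Injective (f ℓ))
    (hlt : Fintype.card ι * Module.finrank K V <
      Module.finrank K V + ∑ ℓ, Module.finrank K (W ℓ)) :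
    ∃ v ≠ 0, ∀ ℓ, v ∈ LinearMap.range (f ℓ) := by
  let Φ : V × (∀ ℓ, W ℓ) →ₗ[K] ι → V :=
    LinearMap.pi fun ℓ => f ℓ ∘ₗ LinearMap.proj ℓ ∘ₗ LinearMap.snd K _ _ - LinearMap.fst K _ _
  have hΦ : ¬ Function.Injective Φ := fun hinj => by
    have hle := LinearMap.finrank_le_finrank_of_injective hinj
    rw [Module.finrank_prod, Module.finrank_pi_fintype, Module.finrank_pi_fintype,
      Finset.sum_const, Finset.card_univ, smul_eq_mul] at hle
    exact hle.not_gt hlt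
  obtain ⟨⟨v, w⟩, hker, hne⟩ : ∃ p, Φ p = 0 ∧ p ≠ 0 := by
    simpa [injective_iff_map_eq_zero] using hΦ
  have heq (ℓ : ι) : f ℓ (w ℓ) = v := sub_eq_zero.1 (congrFun hker ℓ)
  refine ⟨v, fun hv => hne ?_, fun ℓ => ⟨w ℓ, heq ℓ⟩⟩
  have hw : w = 0 := funext fun ℓ => hf ℓ (by rw [heq, hv, Pi.zero_apply, map_zero])
  rw [hv, hw, Prod.mk_zero_zero]

end LinearAlgebra

section CoeffSpace

variable {K M : Type*} [Semiring K] [AddCommMonoid M] [Module K M]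

/-- The coefficient sequences of operators of order at most `r` with coefficients in `V`. Operators
are encoded by sequences indexed by all of `ℕ`, zero beyond the order. -/
def coeffSpace (r : ℕ) (V : Submodule K M) : Submodule K (ℕ → M) where
  carrier := {c | (∀ i, c i ∈ V) ∧ ∀ i, r < i → c i = 0}
  add_mem' hb hc := ⟨fun i => add_mem (hb.1 i) (hc.1 i),
    fun i hi => by rw [Pi.add_apply, hb.2 i hi, hc.2 i hi, add_zero]⟩
  zero_mem' := ⟨fun _ => zero_mem V, fun _ _ => rfl⟩
  smul_mem' t _ hc := ⟨fun i => V.smul_mem t (hc.1 i),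
    fun i hi => by rw [Pi.smul_apply, hc.2 i hi, smul_zero]⟩

theorem coeffSpace_mono {V W : Submodule K M} (h : V ≤ W) (r : ℕ) :
    coeffSpace r V ≤ coeffSpace r W :=
  fun _ hc => ⟨fun i => h (hc.1 i), hc.2⟩

theorem indicator_Iic_mem_coeffSpace {r : ℕ} {V : Submodule K M} {c : ℕ → M}
    (hc : ∀ i ≤ r, c i ∈ V) : (Set.Iic r).indicator c ∈ coeffSpace r V := by
  refine ⟨fun i => ?_, fun i hi => Set.indicator_of_notMem (Set.notMem_Iic.2 hi) c⟩
  by_cases hi : i ∈ Set.Iic r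
  · rw [Set.indicator_of_mem hi]
    exact hc i hi
  · rw [Set.indicator_of_notMem hi]
    exact zero_mem V

/-- The identification of `coeffSpace r V` with the `(r + 1)`-tuples in `V`, which provides its
rank. -/
def coeffSpaceEquiv (r : ℕ) (V : Submodule K M) : coeffSpace r V ≃ₗ[K] (Fin (r + 1) → V) where
  toFun c i := ⟨c.1 i, c.2.1 i⟩
  map_add' _ _ := rfl
  map_smul' _ _ := rfl
  invFun v := ⟨fun i => if hi : i < r + 1 then v ⟨i, hi⟩ else 0,
    fun i => by dsimp only; split_ifs <;> simp, fun i hi => dif_neg (by lia)⟩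
  left_inv c := by
    ext i
    by_cases hi : i < r + 1
    · simp [hi]
    · simp [hi, c.2.2 i (by lia)]
  right_inv v := by
    funext i
    ext1
    exact dif_pos i.2

variable (r : ℕ) (V : Submodule K M) [Module.Free K V] [Module.Finite K V]

instance : Module.Free K (coeffSpace r V) :=
  Module.Free.of_equiv (coeffSpaceEquiv r V).symm

instance : Module.Finite K (coeffSpace r V) :=
  Module.Finite.equiv (coeffSpaceEquiv r V).symm

theorem finrank_coeffSpace [StrongRankCondition K] :
    Module.finrank K (coeffSpace r V) = (r + 1) * Module.finrank K V := by
  rw [(coeffSpaceEquiv r V).finrank_eq, Module.finrank_pi_fintype, Finset.sum_const,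
    Finset.card_univ, Fintype.card_fin, smul_eq_mul]

end CoeffSpace

section SkewProduct

open Finset.HasAntidiagonal (antidiagonal mem_antidiagonal)

variable {K R : Type*} [CommRing K] [Ring R] [Algebra K R] (σ : R →ₐ[K] R)

/-- The operator `Σ_{i ≤ r} (c_i·) ∘ σ^i` on `R`. -/
noncomputable def skewOperator (r : ℕ) (c : ℕ → R) : Module.End K R :=
  ∑ i ∈ Finset.range (r + 1), LinearMap.mulLeft K (c i) ∘ₗ (σ.toLinearMap : Module.End K R) ^ i

/-- The map `m ↦ m a` on coefficient sequences, where the product is that of skew power series: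
`S x = σ(x) S`, hence `(m a)_k = Σ_{j + i = k} m_j σ^j(a_i)`. -/
def skewMulRight (a : ℕ → R) : (ℕ → R) →ₗ[K] (ℕ → R) where
  toFun m k := ∑ p ∈ antidiagonal k, m p.1 * (σ ^ p.1) (a p.2)
  map_add' m m' := by
    ext k
    simp only [Pi.add_apply, add_mul, Finset.sum_add_distrib]
  map_smul' t m := by
    ext k
    simp only [Pi.smul_apply, smul_mul_assoc, Finset.smul_sum, RingHom.id_apply]

variable {σ}

theorem skewMulRight_apply (a m : ℕ → R) (k : ℕ) :
    skewMulRight σ a m k = ∑ p ∈ antidiagonal k, m p.1 * (σ ^ p.1) (a p.2) :=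
  rfl

theorem skewOperator_apply (r : ℕ) (c : ℕ → R) (x : R) :
    skewOperator σ r c x = ∑ i ∈ Finset.range (r + 1), c i * (σ ^ i) x := by
  simp [skewOperator, Module.End.pow_apply, AlgHom.coe_pow]

theorem skewOperator_congr {r : ℕ} {b c : ℕ → R} (h : ∀ i ≤ r, b i = c i) :
    skewOperator σ r b = skewOperator σ r c :=
  Finset.sum_congr rfl fun i hi => by rw [h i (Finset.mem_range_succ_iff.1 hi)]

theorem sum_range_sum_antidiagonal_eq_sum_range_sum_range {M : Type*} [AddCommMonoid M] {q s : ℕ}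
    {g : ℕ → ℕ → M} (hq : ∀ j i, q < j → g j i = 0) (hs : ∀ j i, s < i → g j i = 0) :
    ∑ k ∈ Finset.range (q + s + 1), ∑ p ∈ antidiagonal k, g p.1 p.2 =
      ∑ j ∈ Finset.range (q + 1), ∑ i ∈ Finset.range (s + 1), g j i := by
  have hmaps : ∀ p ∈ Finset.range (q + 1) ×ˢ Finset.range (s + 1),
      p.1 + p.2 ∈ Finset.range (q + s + 1) := by
    simp only [Finset.mem_product, Finset.mem_range]
    lia
  rw [← Finset.sum_product', ← Finset.sum_fiberwise_of_maps_to hmaps]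
  refine Finset.sum_congr rfl fun k _ => (Finset.sum_subset ?_ fun p hp hnot => ?_).symm
  · intro p hp
    exact mem_antidiagonal.2 (Finset.mem_filter.1 hp).2
  · simp only [Finset.mem_filter, Finset.mem_product, Finset.mem_range,
      mem_antidiagonal.1 hp, and_true, not_and_or, not_lt] at hnot
    exact hnot.elim (hq _ _) (hs _ _)

theorem skewOperator_skewMulRight {q s : ℕ} {a m : ℕ → R} (hm : ∀ j, q < j → m j = 0)
    (ha : ∀ i, s < i → a i = 0) :
    skewOperator σ (q + s) (skewMulRight σ a m) = skewOperator σ q m ∘ₗ skewOperator σ s a := by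
  ext x
  simp only [LinearMap.comp_apply, skewOperator_apply, skewMulRight_apply, Finset.sum_mul]
  calc
    _ = ∑ k ∈ Finset.range (q + s + 1), ∑ p ∈ antidiagonal k,
        m p.1 * (σ ^ p.1) (a p.2 * (σ ^ p.2) x) := by
      refine Finset.sum_congr rfl fun k _ => Finset.sum_congr rfl fun p hp => ?_
      rw [← mem_antidiagonal.1 hp, pow_add, AlgHom.mul_apply, map_mul, mul_assoc]
    _ = ∑ j ∈ Finset.range (q + 1), ∑ i ∈ Finset.range (s + 1),
        m j * (σ ^ j) (a i * (σ ^ i) x) :=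
      sum_range_sum_antidiagonal_eq_sum_range_sum_range
        (g := fun j i => m j * (σ ^ j) (a i * (σ ^ i) x))
        (fun j i hj => by rw [hm j hj, zero_mul])
        (fun j i hi => by rw [ha i hi, zero_mul, map_zero, mul_zero])
    _ = _ := by simp only [map_sum, Finset.mul_sum]

theorem skewMulRight_mem_coeffSpace {q s : ℕ} {W A : Submodule K R}
    (hσ : ∀ x ∈ A, σ x ∈ A) {a m : ℕ → R} (ha : a ∈ coeffSpace s A) (hm : m ∈ coeffSpace q W) :
    skewMulRight σ a m ∈ coeffSpace (q + s) (W * A) := by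
  have hpow (j : ℕ) : ∀ x ∈ A, (σ ^ j) x ∈ A := by
    rw [AlgHom.coe_pow]
    exact Set.MapsTo.iterate hσ j
  refine ⟨fun k => ?_, fun k hk => ?_⟩ <;> rw [skewMulRight_apply]
  · exact sum_mem fun p _ => Submodule.mul_mem_mul (hm.1 _) (hpow _ _ (ha.1 _))
  · refine Finset.sum_eq_zero fun p hp => ?_
    have hpk := mem_antidiagonal.1 hp
    obtain hj | hi : q < p.1 ∨ s < p.2 := by lia
    · rw [hm.2 _ hj, zero_mul]
    · rw [ha.2 _ hi, map_zero, mul_zero]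

theorem skewMulRight_injective [NoZeroDivisors R] (hσ : Function.Injective σ) {a : ℕ → R}
    (ha : a ≠ 0) : Function.Injective (skewMulRight σ a) := by
  classical
  refine (injective_iff_map_eq_zero _).2 fun m hprod => by_contra fun hm => ?_
  have hm' : ∃ j, m j ≠ 0 := Function.ne_iff.1 hm
  have ha' : ∃ i, a i ≠ 0 := Function.ne_iff.1 ha
  have hlowest : skewMulRight σ a m (Nat.find hm' + Nat.find ha') =
      m (Nat.find hm') * (σ ^ Nat.find hm') (a (Nat.find ha')) := by
    refine Finset.sum_eq_single_of_mem (Nat.find hm', Nat.find ha')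
      (mem_antidiagonal.2 rfl) fun p hp hne => ?_
    rw [mem_antidiagonal] at hp
    obtain hj | hi : p.1 < Nat.find hm' ∨ p.2 < Nat.find ha' := by
      by_contra! hge
      exact hne (Prod.ext (by lia) (by lia))
    · rw [not_not.1 (Nat.find_min hm' hj), zero_mul]
    · rw [not_not.1 (Nat.find_min ha' hi), map_zero, mul_zero]
  have hinj : Function.Injective (σ ^ Nat.find hm') := by
    rw [AlgHom.coe_pow]
    exact hσ.iterate _
  rw [hprod] at hlowest
  exact mul_ne_zero (Nat.find_spec hm') ((map_ne_zero_iff _ hinj).2 (Nat.find_spec ha'))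
    hlowest.symm

theorem exists_common_left_multiple_skewOperator [StrongRankCondition K] [NoZeroDivisors R]
    (hσ : Function.Injective σ) {ι : Type*} [Fintype ι] {r : ℕ} {q s : ι → ℕ}
    {V : Submodule K R} {W A : ι → Submodule K R} [Module.Free K V] [Module.Finite K V]
    [∀ ℓ, Module.Free K (W ℓ)] [∀ ℓ, Module.Finite K (W ℓ)] (hr : ∀ ℓ, q ℓ + s ℓ = r)
    (hV : ∀ ℓ, W ℓ * A ℓ ≤ V) (hA : ∀ ℓ, ∀ x ∈ A ℓ, σ x ∈ A ℓ) {a : ι → ℕ → R}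
    (ha : ∀ ℓ, a ℓ ∈ coeffSpace (s ℓ) (A ℓ)) (ha0 : ∀ ℓ, a ℓ ≠ 0)
    (hlt : Fintype.card ι * ((r + 1) * Module.finrank K V) <
      (r + 1) * Module.finrank K V + ∑ ℓ, (q ℓ + 1) * Module.finrank K (W ℓ)) :
    ∃ c ∈ coeffSpace r V, c ≠ 0 ∧ ∀ ℓ, ∃ m ∈ coeffSpace (q ℓ) (W ℓ),
      skewOperator σ r c = skewOperator σ (q ℓ) m ∘ₗ skewOperator σ (s ℓ) (a ℓ) := by
  have hmaps (ℓ : ι) : ∀ m ∈ coeffSpace (q ℓ) (W ℓ), skewMulRight σ (a ℓ) m ∈ coeffSpace r V :=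
    fun m hm => hr ℓ ▸ coeffSpace_mono (hV ℓ) _ (skewMulRight_mem_coeffSpace (hA ℓ) (ha ℓ) hm)
  obtain ⟨c, hc0, hc⟩ := exists_ne_zero_forall_mem_range
    (fun ℓ => (skewMulRight σ (a ℓ)).restrict (hmaps ℓ))
    (fun ℓ _ _ h => Subtype.ext (skewMulRight_injective hσ (ha0 ℓ) (congrArg Subtype.val h)))
    (by simpa only [finrank_coeffSpace] using hlt)
  refine ⟨c, c.2, by simpa using hc0, fun ℓ => ?_⟩
  obtain ⟨m, rfl⟩ := hc ℓ
  exact ⟨m, m.2, hr ℓ ▸ skewOperator_skewMulRight m.2.2 (ha ℓ).2⟩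

end SkewProduct

section DegreesLE

variable {R τ : Type*} [CommSemiring R]

theorem degrees_aeval_le {g : τ → MvPolynomial τ R} (hg : ∀ i, (g i).degrees ≤ {i})
    (f : MvPolynomial τ R) : (aeval g f).degrees ≤ f.degrees := by
  classical
  rw [aeval_def, eval₂_eq]
  refine (degrees_sum_le _ _).trans (Finset.sup_le fun m hm => ?_)
  calc
    _ ≤ 0 + ∑ i ∈ m.support, m i • {i} :=
      degrees_mul_le.trans (add_le_add (degrees_C _).le (degrees_prod_le.trans
        (Finset.sum_le_sum fun i _ => degrees_pow_le.trans (nsmul_le_nsmul_right (hg i) _))))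
    _ = Finsupp.toMultiset m := by rw [zero_add, Finsupp.toMultiset_apply, Finsupp.sum]
    _ ≤ f.degrees := by
      rw [degrees_def]
      exact Finset.le_sup (f := fun m => Finsupp.toMultiset m) hm

theorem mem_degreesLE_iff_degreeOf_le [DecidableEq τ] {s : Multiset τ} {f : MvPolynomial τ R} :
    f ∈ degreesLE R τ s ↔ ∀ i, degreeOf i f ≤ s.count i := by
  simp only [mem_degreesLE, Multiset.le_iff_count, degreeOf_def]

theorem degreesLE_eq_restrictSupport (s : Multiset τ) :
    degreesLE R τ s = restrictSupport R (Finsupp.toMultiset ⁻¹' Set.Iic s) := by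
  classical
  ext f
  rw [mem_degreesLE, degrees_def, Finset.sup_le_iff, mem_restrictSupport_iff]
  rfl

/-- The monomial basis of `degreesLE R τ s`, indexed by the multisets of variables below `s`. -/
noncomputable def degreesLEBasis [DecidableEq τ] (s : Multiset τ) :
    Module.Basis (Set.Iic s) R (degreesLE R τ s) :=
  ((basisRestrictSupport R (Finsupp.toMultiset ⁻¹' Set.Iic s)).map
    (LinearEquiv.ofEq _ _ (degreesLE_eq_restrictSupport s).symm)).reindex
      (Finsupp.orderIsoMultiset.toEquiv.subtypeEquiv fun _ => Iff.rfl)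

instance (s : Multiset τ) : Module.Free R (degreesLE R τ s) := by
  classical exact .of_basis (degreesLEBasis s)

instance (s : Multiset τ) : Module.Finite R (degreesLE R τ s) := by
  classical exact .of_basis (degreesLEBasis s)

theorem finrank_degreesLE [Nontrivial R] [DecidableEq τ] (s : Multiset τ) :
    Module.finrank R (degreesLE R τ s) = ∏ i ∈ s.toFinset, (s.count i + 1) := by
  rw [Module.finrank_eq_card_basis (degreesLEBasis s), Fintype.card_Iic, Multiset.card_Iic]

end DegreesLE

section Bidegree

variable {C : Type*} [CommSemiring C]

/-- The exponent of `x ^ d * y ^ h` as a multiset, so that `degreesLE C (Fin 2) (bidegree d h)`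
consists of the polynomials of degree at most `d` and height at most `h`. -/
def bidegree (d h : ℕ) : Multiset (Fin 2) :=
  Multiset.replicate d 0 + Multiset.replicate h 1

theorem bidegree_add (d h d' h' : ℕ) :
    bidegree (d + d') (h + h') = bidegree d h + bidegree d' h' := by
  simp only [bidegree, Multiset.replicate_add, add_add_add_comm]

theorem count_bidegree (d h : ℕ) (i : Fin 2) : (bidegree d h).count i = ![d, h] i := by
  fin_cases i <;> simp [bidegree, Multiset.count_replicate]

theorem mem_degreesLE_bidegree {d h : ℕ} {f : MvPolynomial (Fin 2) C} :
    f ∈ degreesLE C (Fin 2) (bidegree d h) ↔ degreeOf 0 f ≤ d ∧ degreeOf 1 f ≤ h := by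
  simp [mem_degreesLE_iff_degreeOf_le, count_bidegree, Fin.forall_fin_two, -mem_degreesLE]

theorem finrank_degreesLE_bidegree [Nontrivial C] (d h : ℕ) :
    Module.finrank C (degreesLE C (Fin 2) (bidegree d h)) = (d + 1) * (h + 1) := by
  rw [finrank_degreesLE, Finset.prod_subset (Finset.subset_univ _) fun i _ hi => by simpa using hi]
  simp [count_bidegree]

end Bidegree

section ShiftX

variable {C : Type*} [CommRing C]

theorem shiftX_injective : Function.Injective (shiftX C) := by
  have hcomp : (aeval ![X 0 - 1, X 1]).comp (shiftX C) = AlgHom.id C (MvPolynomial (Fin 2) C) := by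
    ext i
    fin_cases i <;> simp [shiftX]
  have hinv : Function.LeftInverse (aeval ![X 0 - 1, X 1]) (shiftX C) := DFunLike.congr_fun hcomp
  exact hinv.injective

theorem degrees_shiftX_le (f : MvPolynomial (Fin 2) C) : (shiftX C f).degrees ≤ f.degrees := by
  refine degrees_aeval_le (fun i => ?_) f
  fin_cases i
  · exact degrees_add_le.trans (sup_le (degrees_X' 0) (by simp))
  · exact degrees_X' 1

end ShiftX

section Surface

theorem surface_eq_sub_sum_sub {ι A : Type*} [CommRing A] (s : Finset ι) (R D H : A)
    (u v w : ι → A) :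
    R * D * H - R * D * ∑ ℓ ∈ s, w ℓ - R * H * ∑ ℓ ∈ s, v ℓ - D * H * ∑ ℓ ∈ s, u ℓ
        + R * ∑ ℓ ∈ s, v ℓ * w ℓ + D * ∑ ℓ ∈ s, u ℓ * w ℓ + H * ∑ ℓ ∈ s, u ℓ * v ℓ
        - ∑ ℓ ∈ s, u ℓ * v ℓ * w ℓ =
      R * D * H - ∑ ℓ ∈ s, (R * D * H - (R - u ℓ) * (D - v ℓ) * (H - w ℓ)) := by
  have hterm (ℓ : ι) : R * D * H - (R - u ℓ) * (D - v ℓ) * (H - w ℓ) =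
      R * D * w ℓ + R * H * v ℓ + D * H * u ℓ - R * (v ℓ * w ℓ) - D * (u ℓ * w ℓ)
        - H * (u ℓ * v ℓ) + u ℓ * v ℓ * w ℓ := by ring
  simp only [hterm, Finset.sum_add_distrib, Finset.sum_sub_distrib, ← Finset.mul_sum]
  ring

theorem equations_lt_unknowns {ι : Type*} [Fintype ι] {r d h : ℕ} {rr dd hh : ι → ℕ}
    (hr : ∀ ℓ, rr ℓ ≤ r) (hd : ∀ ℓ, dd ℓ ≤ d) (hh' : ∀ ℓ, hh ℓ ≤ h)
    (hineq :
      ((r : ℤ) + 1) * ((d : ℤ) + 1) * ((h : ℤ) + 1)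
        - ((r : ℤ) + 1) * ((d : ℤ) + 1) * (∑ ℓ, (hh ℓ : ℤ))
        - ((r : ℤ) + 1) * ((h : ℤ) + 1) * (∑ ℓ, (dd ℓ : ℤ))
        - ((d : ℤ) + 1) * ((h : ℤ) + 1) * (∑ ℓ, (rr ℓ : ℤ))
        + ((r : ℤ) + 1) * (∑ ℓ, (dd ℓ : ℤ) * (hh ℓ : ℤ))
        + ((d : ℤ) + 1) * (∑ ℓ, (rr ℓ : ℤ) * (hh ℓ : ℤ))
        + ((h : ℤ) + 1) * (∑ ℓ, (rr ℓ : ℤ) * (dd ℓ : ℤ))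
        - (∑ ℓ, (rr ℓ : ℤ) * (dd ℓ : ℤ) * (hh ℓ : ℤ)) > 0) :
    Fintype.card ι * ((r + 1) * ((d + 1) * (h + 1))) <
      (r + 1) * ((d + 1) * (h + 1)) +
        ∑ ℓ, (r - rr ℓ + 1) * ((d - dd ℓ + 1) * (h - hh ℓ + 1)) := by
  rw [surface_eq_sub_sum_sub, Finset.sum_sub_distrib, Finset.sum_const, Finset.card_univ,
    nsmul_eq_mul] at hineq
  zify [hr _, hd _, hh' _]
  simp only [sub_add_eq_add_sub, ← mul_assoc] at hineq ⊢
  linarith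

end Surface

theorem common_left_multiple_order_degree_height_shift_general
    (C : Type*) [CommRing C] [IsDomain C] (n : ℕ)
    (rr dd hh : Fin n → ℕ)
    (a : Fin n → ℕ → MvPolynomial (Fin 2) C)
    (hnz : ∀ ℓ, ∃ i ≤ rr ℓ, a ℓ i ≠ 0)
    (hd : ∀ ℓ, ∀ i ≤ rr ℓ, degreeOf 0 (a ℓ i) ≤ dd ℓ)
    (hh' : ∀ ℓ, ∀ i ≤ rr ℓ, degreeOf 1 (a ℓ i) ≤ hh ℓ)
    (r d h : ℕ)
    (hr : ∀ ℓ, rr ℓ ≤ r) (hdle : ∀ ℓ, dd ℓ ≤ d) (hhle : ∀ ℓ, hh ℓ ≤ h)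
    (hineq :
      ((r : ℤ) + 1) * ((d : ℤ) + 1) * ((h : ℤ) + 1)
        - ((r : ℤ) + 1) * ((d : ℤ) + 1) * (∑ ℓ, (hh ℓ : ℤ))
        - ((r : ℤ) + 1) * ((h : ℤ) + 1) * (∑ ℓ, (dd ℓ : ℤ))
        - ((d : ℤ) + 1) * ((h : ℤ) + 1) * (∑ ℓ, (rr ℓ : ℤ))
        + ((r : ℤ) + 1) * (∑ ℓ, (dd ℓ : ℤ) * (hh ℓ : ℤ))
        + ((d : ℤ) + 1) * (∑ ℓ, (rr ℓ : ℤ) * (hh ℓ : ℤ))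
        + ((h : ℤ) + 1) * (∑ ℓ, (rr ℓ : ℤ) * (dd ℓ : ℤ))
        - (∑ ℓ, (rr ℓ : ℤ) * (dd ℓ : ℤ) * (hh ℓ : ℤ)) > 0) :
    ∃ (c : ℕ → MvPolynomial (Fin 2) C) (mm : Fin n → ℕ → MvPolynomial (Fin 2) C),
      (¬ ∀ i ≤ r, c i = 0) ∧
      (∀ i ≤ r, degreeOf 0 (c i) ≤ d ∧ degreeOf 1 (c i) ≤ h) ∧
      (∀ ℓ, ∀ j ≤ r - rr ℓ,
        degreeOf 0 (mm ℓ j) ≤ d - dd ℓ ∧ degreeOf 1 (mm ℓ j) ≤ h - hh ℓ) ∧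
      (∀ ℓ,
        (∑ i ∈ Finset.range (r + 1),
            (LinearMap.mulLeft C (c i)) ∘ₗ
              (((shiftX C).toLinearMap :
                  Module.End C (MvPolynomial (Fin 2) C)) ^ i)) =
        (∑ j ∈ Finset.range (r - rr ℓ + 1),
            (LinearMap.mulLeft C (mm ℓ j)) ∘ₗ
              (((shiftX C).toLinearMap :
                  Module.End C (MvPolynomial (Fin 2) C)) ^ j)) ∘ₗ
          (∑ i ∈ Finset.range (rr ℓ + 1),
            (LinearMap.mulLeft C (a ℓ i)) ∘ₗ
              (((shiftX C).toLinearMap :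
                  Module.End C (MvPolynomial (Fin 2) C)) ^ i))) := by
  have ha (ℓ : Fin n) : (Set.Iic (rr ℓ)).indicator (a ℓ) ∈
      coeffSpace (rr ℓ) (degreesLE C (Fin 2) (bidegree (dd ℓ) (hh ℓ))) :=
    indicator_Iic_mem_coeffSpace fun i hi => mem_degreesLE_bidegree.2 ⟨hd ℓ i hi, hh' ℓ i hi⟩
  have ha0 (ℓ : Fin n) : (Set.Iic (rr ℓ)).indicator (a ℓ) ≠ 0 := by
    obtain ⟨i, hi, hai⟩ := hnz ℓ
    exact fun h0 => hai ((Set.indicator_of_mem (Set.mem_Iic.2 hi) (a ℓ)).symm.trans (congrFun h0 i))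
  obtain ⟨c, hc, hc0, hcm⟩ := exists_common_left_multiple_skewOperator
    (V := degreesLE C (Fin 2) (bidegree d h))
    (W := fun ℓ => degreesLE C (Fin 2) (bidegree (d - dd ℓ) (h - hh ℓ)))
    shiftX_injective (fun ℓ => Nat.sub_add_cancel (hr ℓ))
    (fun ℓ => by
      rw [← degreesLE_add, ← bidegree_add, Nat.sub_add_cancel (hdle ℓ),
        Nat.sub_add_cancel (hhle ℓ)])
    (fun _ f hf => (degrees_shiftX_le f).trans hf) ha ha0
    (by simpa only [finrank_degreesLE_bidegree] using equations_lt_unknowns hr hdle hhle hineq)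
  choose m hm hcomp using hcm
  refine ⟨c, m, fun hzero => hc0 (funext fun i => ?_), fun i _ => mem_degreesLE_bidegree.1 (hc.1 i),
    fun ℓ j _ => mem_degreesLE_bidegree.1 ((hm ℓ).1 j), fun ℓ => (hcomp ℓ).trans ?_⟩
  · exact (le_or_gt i r).elim (hzero i) (hc.2 i)
  · rw [skewOperator_congr fun i hi => Set.indicator_of_mem (Set.mem_Iic.2 hi) (a ℓ)]
    rfl

/-- Order–degree–height surface for common left multiples of shift operators
with coefficients in `C[x,y]` (Theorem 1 of the paper, shift case).
If `(r,d,h)` satisfies the stated polynomial inequality, then the operators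
`L_ℓ = Σ_i (a_{ℓ,i}·)∘S_x^i` (of order `r_ℓ`, degree `≤ d_ℓ`, height `≤ h_ℓ`) have a
nonzero common left multiple of order at most `r`, degree at most `d`, and height at
most `h`, with multipliers of the expected shape. -/
theorem common_left_multiple_order_degree_height_shift
    (C : Type*) [Field C] [CharZero C] (n : ℕ)
    (rr dd hh : Fin n → ℕ)
    (a : Fin n → ℕ → MvPolynomial (Fin 2) C)
    (hnz : ∀ ℓ, ∃ i ≤ rr ℓ, a ℓ i ≠ 0)
    (hd : ∀ ℓ, ∀ i ≤ rr ℓ, degreeOf 0 (a ℓ i) ≤ dd ℓ)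
    (hh' : ∀ ℓ, ∀ i ≤ rr ℓ, degreeOf 1 (a ℓ i) ≤ hh ℓ)
    (r d h : ℕ)
    (hr : ∀ ℓ, rr ℓ ≤ r) (hdle : ∀ ℓ, dd ℓ ≤ d) (hhle : ∀ ℓ, hh ℓ ≤ h)
    (hineq :
      ((r : ℤ) + 1) * ((d : ℤ) + 1) * ((h : ℤ) + 1)
        - ((r : ℤ) + 1) * ((d : ℤ) + 1) * (∑ ℓ, (hh ℓ : ℤ))
        - ((r : ℤ) + 1) * ((h : ℤ) + 1) * (∑ ℓ, (dd ℓ : ℤ))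
        - ((d : ℤ) + 1) * ((h : ℤ) + 1) * (∑ ℓ, (rr ℓ : ℤ))
        + ((r : ℤ) + 1) * (∑ ℓ, (dd ℓ : ℤ) * (hh ℓ : ℤ))
        + ((d : ℤ) + 1) * (∑ ℓ, (rr ℓ : ℤ) * (hh ℓ : ℤ))
        + ((h : ℤ) + 1) * (∑ ℓ, (rr ℓ : ℤ) * (dd ℓ : ℤ))
        - (∑ ℓ, (rr ℓ : ℤ) * (dd ℓ : ℤ) * (hh ℓ : ℤ)) > 0) :
    ∃ (c : ℕ → MvPolynomial (Fin 2) C) (mm : Fin n → ℕ → MvPolynomial (Fin 2) C),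
      (¬ ∀ i ≤ r, c i = 0) ∧
      (∀ i ≤ r, degreeOf 0 (c i) ≤ d ∧ degreeOf 1 (c i) ≤ h) ∧
      (∀ ℓ, ∀ j ≤ r - rr ℓ,
        degreeOf 0 (mm ℓ j) ≤ d - dd ℓ ∧ degreeOf 1 (mm ℓ j) ≤ h - hh ℓ) ∧
      (∀ ℓ,
        (∑ i ∈ Finset.range (r + 1),
            (LinearMap.mulLeft C (c i)) ∘ₗ
              (((shiftX C).toLinearMap :
                  Module.End C (MvPolynomial (Fin 2) C)) ^ i)) =
        (∑ j ∈ Finset.range (r - rr ℓ + 1),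
            (LinearMap.mulLeft C (mm ℓ j)) ∘ₗ
              (((shiftX C).toLinearMap :
                  Module.End C (MvPolynomial (Fin 2) C)) ^ j)) ∘ₗ
          (∑ i ∈ Finset.range (rr ℓ + 1),
            (LinearMap.mulLeft C (a ℓ i)) ∘ₗ
              (((shiftX C).toLinearMap :
                  Module.End C (MvPolynomial (Fin 2) C)) ^ i))) := by
  exact common_left_multiple_order_degree_height_shift_general C n rr dd hh a hnz hd hh' r d h
    hr hdle hhle hineq
end

section
/- Suppose the coefficients c_0, …, c_r ∈ C[x,y] satisfy deg_x c_i ≤ d and deg_y c_i ≤ h for all i, and let P = Σ_{i=0}^{r} c_i · α^i · S_x^i(p) · Π_{m=1}^{M} P_{i,m}. Let Y ∈ C[x,y,k] be a polynomial with deg_x Y ≤ d + θ_x + r·μ − ν, deg_y Y ≤ h + θ_y + r·ξ − η, and deg_k Y ≤ θ_k + r·μ − ν. Then the polynomial P − (Q·S_k(Y) − R·Y) satisfies deg_x(P − (Q·S_k(Y) − R·Y)) ≤ d + θ_x + r·μ, deg_y(P − (Q·S_k(Y) − R·Y)) ≤ h + θ_y + r·ξ, and deg_k(P − (Q·S_k(Y)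 − R·Y)) ≤ θ_k + r·μ; consequently it has at most (d + θ_x + r·μ + 1)(h + θ_y + r·ξ + 1)(θ_k + r·μ + 1) nonzero monomials in x, y, k. -/
open MvPolynomial

noncomputable section

/-- `C[x,y,k]`, realized as `MvPolynomial (Fin 3) C` with `x = X 0`, `y = X 1`, `k = X 2`. -/
abbrev P3 (C : Type*) [CommSemiring C] := MvPolynomial (Fin 3) C

/-- The embedding `C[y] → C[x,y,k]` sending the indeterminate to `y = X 1`. -/
def toY {C : Type*} [CommSemiring C] (q : Polynomial C) : P3 C :=
  Polynomial.aeval (X 1 : P3 C) q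

/-- The rising factorial `q^{(n)} = q(q+1)⋯(q+n−1)`, with `q^{(0)} = 1`. -/
def risingFactorial {C : Type*} [CommSemiring C] (q : P3 C) (n : ℕ) : P3 C :=
  ∏ j ∈ Finset.range n, (q + (j : P3 C))

/-- The shift `S_x` on `C[x,y,k]`: `x ↦ x+1`, `y ↦ y`, `k ↦ k`. -/
def SX3 (C : Type*) [CommSemiring C] : P3 C →ₐ[C] P3 C := aeval ![X 0 + 1, X 1, X 2]

/-- The shift `S_k` on `C[x,y,k]`: `x ↦ x`, `y ↦ y`, `k ↦ k+1`. -/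
def SK3 (C : Type*) [CommSemiring C] : P3 C →ₐ[C] P3 C := aeval ![X 0, X 1, X 2 + 1]

/-- The fixed data of a proper hypergeometric term
`H = p α^x β^k Π_m Γ(A_m)Γ(B_m)/(Γ(U_m)Γ(V_m))`, together with a fixed order `r`. -/
structure HyperData (C : Type*) [Field C] [CharZero C] where
  M : ℕ
  r : ℕ
  a : Fin M → ℕ
  a' : Fin M → ℕ
  b : Fin M → ℕ
  b' : Fin M → ℕ
  u : Fin M → ℕ
  u' : Fin M → ℕ
  v : Fin M → ℕ
  v' : Fin M → ℕ
  a'' : Fin M → Polynomial C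
  b'' : Fin M → Polynomial C
  u'' : Fin M → Polynomial C
  v'' : Fin M → Polynomial C
  p : P3 C
  hp : p ≠ 0
  α : Polynomial C
  β : Polynomial C
  hα : α ≠ 0
  hβ : β ≠ 0

namespace HyperData

variable {C : Type*} [Field C] [CharZero C] (H : HyperData C)

/-- `A_m = a_m x + a'_m k + a''_m`. -/
def A (m : Fin H.M) : P3 C := (H.a m : P3 C) * X 0 + (H.a' m : P3 C) * X 2 + toY (H.a'' m)

/-- `B_m = b_m x − b'_m k + b''_m`. -/
def B (m : Fin H.M) : P3 C := (H.b m : P3 C) * X 0 - (H.b' m : P3 C) * X 2 + toY (H.b'' m)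

/-- `U_m = u_m x + u'_m k + u''_m`. -/
def U (m : Fin H.M) : P3 C := (H.u m : P3 C) * X 0 + (H.u' m : P3 C) * X 2 + toY (H.u'' m)

/-- `V_m = v_m x − v'_m k + v''_m`. -/
def V (m : Fin H.M) : P3 C := (H.v m : P3 C) * X 0 - (H.v' m : P3 C) * X 2 + toY (H.v'' m)

/-- `P_{i,m} = A_m^{(i a_m)} B_m^{(i b_m)} (U_m+i u_m)^{((r−i)u_m)} (V_m+i v_m)^{((r−i)v_m)}`. -/
def Pim (i : ℕ) (m : Fin H.M) : P3 C :=
  risingFactorial (H.A m) (i * H.a m) * risingFactorial (H.B m) (i * H.b m) *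
    risingFactorial (H.U m + ((i * H.u m : ℕ) : P3 C)) ((H.r - i) * H.u m) *
    risingFactorial (H.V m + ((i * H.v m : ℕ) : P3 C)) ((H.r - i) * H.v m)

/-- `Q = β Π_m A_m^{(a'_m)} (V_m + r v_m − v'_m)^{(v'_m)}`. -/
def Q : P3 C :=
  toY H.β * ∏ m, risingFactorial (H.A m) (H.a' m) *
    risingFactorial (H.V m + ((H.r * H.v m : ℕ) : P3 C) - ((H.v' m : ℕ) : P3 C)) (H.v' m)

/-- `R = Π_m (U_m + r u_m − u'_m)^{(u'_m)} B_m^{(b'_m)}`. -/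
def R : P3 C :=
  ∏ m, risingFactorial (H.U m + ((H.r * H.u m : ℕ) : P3 C) - ((H.u' m : ℕ) : P3 C)) (H.u' m) *
    risingFactorial (H.B m) (H.b' m)

/-- `θ_x = deg_x p`. -/
def θx : ℕ := degreeOf 0 H.p

/-- `θ_y = deg_y p`. -/
def θy : ℕ := degreeOf 1 H.p

/-- `θ_k = deg_k p`. -/
def θk : ℕ := degreeOf 2 H.p

/-- `μ = max(Σ_m (a_m + b_m), Σ_m (u_m + v_m))`. -/
def μ : ℕ := max (∑ m, (H.a m + H.b m)) (∑ m, (H.u m + H.v m))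

/-- `ν = max(Σ_m (a'_m + v'_m), Σ_m (u'_m + b'_m))`. -/
def ν : ℕ := max (∑ m, (H.a' m + H.v' m)) (∑ m, (H.u' m + H.b' m))

/-- `ξ = max(deg_y α + Σ_m (a_m deg_y A_m + b_m deg_y B_m), Σ_m (u_m deg_y U_m + v_m deg_y V_m))`. -/
def ξ : ℕ :=
  max (H.α.natDegree + ∑ m, (H.a m * degreeOf 1 (H.A m) + H.b m * degreeOf 1 (H.B m)))
    (∑ m, (H.u m * degreeOf 1 (H.U m) + H.v m * degreeOf 1 (H.V m)))

/-- `η = max(deg_y β + Σ_m (a'_m deg_y A_m + v'_m deg_y V_m), Σ_m (u'_m deg_y U_m + b'_m deg_y B_m))`. -/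
def η : ℕ :=
  max (H.β.natDegree + ∑ m, (H.a' m * degreeOf 1 (H.A m) + H.v' m * degreeOf 1 (H.V m)))
    (∑ m, (H.u' m * degreeOf 1 (H.U m) + H.b' m * degreeOf 1 (H.B m)))

/-- `P = Σ_{i=0}^{r} c_i α^i S_x^i(p) Π_m P_{i,m}`. -/
def P (c : ℕ → P3 C) : P3 C :=
  ∑ i ∈ Finset.range (H.r + 1), c i * toY H.α ^ i * (⇑(SX3 C))^[i] H.p * ∏ m, H.Pim i m

end HyperData

end

/-! In each variable, the degree is subadditive on products, bounded by the maximum on sums, and not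
increased by adding constants to variables; the bounds for `P` and for `Q·S_k(Y) − R·Y` follow by
counting factors. In `P` the order `r` is split as `i + (r − i)`, and both parts contribute at most
the same degree per unit, which makes the total linear in `r`. -/

section Degree

variable {R σ τ ι : Type*} [CommSemiring R]

theorem degreeOf_add_le_of_le {j : σ} {p q : MvPolynomial σ R} {n : ℕ} (hp : degreeOf j p ≤ n)
    (hq : degreeOf j q ≤ n) : degreeOf j (p + q) ≤ n :=
  (degreeOf_add_le j p q).trans (max_le hp hq)

theorem degreeOf_sub_le_of_le {S : Type*} [CommRing S] {j : σ} {p q : MvPolynomial σ S} {n : ℕ}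
    (hp : degreeOf j p ≤ n) (hq : degreeOf j q ≤ n) : degreeOf j (p - q) ≤ n :=
  (degreeOf_sub_le j p q).trans (max_le hp hq)

theorem degreeOf_mul_le_of_le {j : σ} {p q : MvPolynomial σ R} {m n : ℕ} (hp : degreeOf j p ≤ m)
    (hq : degreeOf j q ≤ n) : degreeOf j (p * q) ≤ m + n :=
  (degreeOf_mul_le j p q).trans (add_le_add hp hq)

theorem degreeOf_sum_le_of_le {j : σ} {s : Finset ι} {f : ι → MvPolynomial σ R} {n : ℕ}
    (h : ∀ i ∈ s, degreeOf j (f i) ≤ n) : degreeOf j (∑ i ∈ s, f i) ≤ n :=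
  (degreeOf_sum_le j s f).trans (Finset.sup_le h)

theorem degreeOf_prod_le_of_le {j : σ} {s : Finset ι} {f : ι → MvPolynomial σ R} {n : ι → ℕ}
    (h : ∀ i ∈ s, degreeOf j (f i) ≤ n i) : degreeOf j (∏ i ∈ s, f i) ≤ ∑ i ∈ s, n i :=
  (degreeOf_prod_le j s f).trans (Finset.sum_le_sum h)

theorem degreeOf_natCast (j : σ) (n : ℕ) : degreeOf j (n : MvPolynomial σ R) = 0 := by
  rw [← map_natCast C n, degreeOf_C]

theorem degreeOf_add_natCast_le (j : σ) (p : MvPolynomial σ R) (n : ℕ) :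
    degreeOf j (p + (n : MvPolynomial σ R)) ≤ degreeOf j p :=
  degreeOf_add_le_of_le le_rfl (by simp only [degreeOf_natCast, zero_le])

theorem degreeOf_add_one_le (j : σ) (p : MvPolynomial σ R) : degreeOf j (p + 1) ≤ degreeOf j p := by
  simpa only [Nat.cast_one] using degreeOf_add_natCast_le j p 1

theorem degreeOf_add_natCast_sub_natCast_le {S : Type*} [CommRing S] (j : σ)
    (p : MvPolynomial σ S) (m n : ℕ) :
    degreeOf j (p + (m : MvPolynomial σ S) - (n : MvPolynomial σ S)) ≤ degreeOf j p :=
  degreeOf_sub_le_of_le (degreeOf_add_natCast_le j p m) (by simp only [degreeOf_natCast, zero_le])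

theorem degreeOf_natCast_mul_X_le_one [Nontrivial R] (i j : σ) (n : ℕ) :
    degreeOf j ((n : MvPolynomial σ R) * X i) ≤ 1 := by
  classical
  rw [← map_natCast C n]
  refine (degreeOf_C_mul_le _ j _).trans ?_
  rw [degreeOf_X]
  split_ifs <;> simp

theorem degreeOf_polynomial_aeval_le (j : σ) (p : MvPolynomial σ R) (q : Polynomial R) :
    degreeOf j (Polynomial.aeval p q) ≤ q.natDegree * degreeOf j p := by
  rw [Polynomial.aeval_eq_sum_range]
  refine degreeOf_sum_le_of_le fun i hi => ?_
  rw [smul_eq_C_mul]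
  calc degreeOf j (C (q.coeff i) * p ^ i) ≤ degreeOf j (p ^ i) := degreeOf_C_mul_le _ j _
    _ ≤ i * degreeOf j p := degreeOf_pow_le j p i
    _ ≤ q.natDegree * degreeOf j p := by gcongr; exact Finset.mem_range_succ_iff.mp hi

theorem degreeOf_aeval_le_sup (j : τ) (f : σ → MvPolynomial τ R) (p : MvPolynomial σ R) :
    degreeOf j (aeval f p) ≤ p.support.sup fun s => s.sum fun i n => n * degreeOf j (f i) := by
  rw [aeval_def, eval₂_eq]
  refine (degreeOf_sum_le j _ _).trans (Finset.sup_mono_fun fun s _ => ?_)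
  exact (degreeOf_C_mul_le _ j _).trans
    (degreeOf_prod_le_of_le fun i _ => degreeOf_pow_le j (f i) (s i))

theorem degreeOf_aeval_le_of_le_degreeOf_X [Nontrivial R] {j : σ} {f : σ → MvPolynomial σ R}
    (hf : ∀ i, degreeOf j (f i) ≤ degreeOf j (X i : MvPolynomial σ R)) (p : MvPolynomial σ R) :
    degreeOf j (aeval f p) ≤ degreeOf j p := by
  classical
  refine (degreeOf_aeval_le_sup j f p).trans (Finset.sup_le fun s hs => ?_)
  calc s.sum (fun i n => n * degreeOf j (f i))
      ≤ s.sum fun i n => n * degreeOf j (X i : MvPolynomial σ R) :=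
        Finset.sum_le_sum fun i _ => Nat.mul_le_mul_left (s i) (hf i)
    _ = s j := by
        simp only [degreeOf_X, mul_ite, mul_one, mul_zero, Finsupp.sum_ite_self_eq]
    _ ≤ degreeOf j p := monomial_le_degreeOf j hs

theorem card_support_le_prod_degreeOf_add_one [Fintype σ] (p : MvPolynomial σ R) :
    p.support.card ≤ ∏ i, (degreeOf i p + 1) := by
  classical
  calc p.support.card
      ≤ (Fintype.piFinset fun i => Finset.range (degreeOf i p + 1)).card :=
        Finset.card_le_card_of_injOn (fun s => ⇑s)
          (fun s hs => Fintype.mem_piFinset.mpr fun i =>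
            Finset.mem_range_succ_iff.mpr (monomial_le_degreeOf i hs))
          DFunLike.coe_injective.injOn
    _ = ∏ i, (degreeOf i p + 1) := by simp only [Fintype.card_piFinset, Finset.card_range]

end Degree

section Shift

variable {C : Type*} [CommSemiring C]

theorem degreeOf_one_toY_le [Nontrivial C] (q : Polynomial C) :
    degreeOf 1 (toY q) ≤ q.natDegree := by
  simpa only [toY, degreeOf_X_self, mul_one] using degreeOf_polynomial_aeval_le 1 (X 1 : P3 C) q

theorem degreeOf_toY_of_ne {j : Fin 3} (hj : j ≠ 1) (q : Polynomial C) :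
    degreeOf j (toY q) = 0 := by
  simpa only [toY, degreeOf_X_of_ne hj, mul_zero, Nat.le_zero] using
    degreeOf_polynomial_aeval_le j (X 1 : P3 C) q

theorem degreeOf_natCast_mul_X_add_add_toY_le_one [Nontrivial C] {j : Fin 3} (hj : j ≠ 1)
    (i₁ i₂ : Fin 3) (n₁ n₂ : ℕ) (q : Polynomial C) :
    degreeOf j ((n₁ : P3 C) * X i₁ + (n₂ : P3 C) * X i₂ + toY q) ≤ 1 :=
  degreeOf_add_le_of_le
    (degreeOf_add_le_of_le (degreeOf_natCast_mul_X_le_one i₁ j n₁)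
      (degreeOf_natCast_mul_X_le_one i₂ j n₂))
    ((degreeOf_toY_of_ne hj q).trans_le zero_le_one)

theorem degreeOf_natCast_mul_X_sub_add_toY_le_one {C : Type*} [CommRing C] [Nontrivial C]
    {j : Fin 3} (hj : j ≠ 1) (i₁ i₂ : Fin 3) (n₁ n₂ : ℕ) (q : Polynomial C) :
    degreeOf j ((n₁ : P3 C) * X i₁ - (n₂ : P3 C) * X i₂ + toY q) ≤ 1 :=
  degreeOf_add_le_of_le
    (degreeOf_sub_le_of_le (degreeOf_natCast_mul_X_le_one i₁ j n₁)
      (degreeOf_natCast_mul_X_le_one i₂ j n₂))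
    ((degreeOf_toY_of_ne hj q).trans_le zero_le_one)

theorem degreeOf_risingFactorial_le_of_le {j : Fin 3} {q : P3 C} {e : ℕ}
    (hq : degreeOf j q ≤ e) (n : ℕ) : degreeOf j (risingFactorial q n) ≤ n * e := by
  simpa only [risingFactorial, Finset.sum_const, Finset.card_range, smul_eq_mul] using
    degreeOf_prod_le_of_le (s := Finset.range n) (n := fun _ => e) fun i _ =>
      (degreeOf_add_natCast_le j q i).trans hq

theorem degreeOf_SX3_le [Nontrivial C] (j : Fin 3) (q : P3 C) :
    degreeOf j (SX3 C q) ≤ degreeOf j q := by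
  refine degreeOf_aeval_le_of_le_degreeOf_X (fun i => ?_) q
  fin_cases i
  exacts [degreeOf_add_one_le j (X 0), le_rfl, le_rfl]

theorem degreeOf_SK3_le [Nontrivial C] (j : Fin 3) (q : P3 C) :
    degreeOf j (SK3 C q) ≤ degreeOf j q := by
  refine degreeOf_aeval_le_of_le_degreeOf_X (fun i => ?_) q
  fin_cases i
  exacts [le_rfl, le_rfl, degreeOf_add_one_le j (X 2)]

theorem degreeOf_SX3_iterate_le [Nontrivial C] (j : Fin 3) (i : ℕ) (q : P3 C) :
    degreeOf j ((⇑(SX3 C))^[i] q) ≤ degreeOf j q :=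
  Function.Iterate.rec (fun s => degreeOf j s ≤ degreeOf j q) le_rfl
    (fun s hs => (degreeOf_SX3_le j s).trans hs) i

end Shift

theorem sum_mul_add_mul_le_sum_add {ι : Type*} {s : Finset ι} (a b : ι → ℕ) {f g : ι → ℕ}
    (hf : ∀ i ∈ s, f i ≤ 1) (hg : ∀ i ∈ s, g i ≤ 1) :
    ∑ i ∈ s, (a i * f i + b i * g i) ≤ ∑ i ∈ s, (a i + b i) :=
  Finset.sum_le_sum fun i hi =>
    add_le_add (mul_le_of_le_one_right' (hf i hi)) (mul_le_of_le_one_right' (hg i hi))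

namespace HyperData

variable {C : Type*} [Field C] [CharZero C] (H : HyperData C)

/-- A bound for the degree in the `j`-th variable contributed to `P` by each unit of the order `r`.
This is the expression defining `ξ` with `y` replaced by an arbitrary variable, so that `ξ` and `μ`,
which bound it in the cases `y` and `x`, `k`, can be treated together. -/
noncomputable def orderDegree (j : Fin 3) : ℕ :=
  max (degreeOf j (toY H.α) + ∑ m, (H.a m * degreeOf j (H.A m) + H.b m * degreeOf j (H.B m)))
    (∑ m, (H.u m * degreeOf j (H.U m) + H.v m * degreeOf j (H.V m)))

/-- A common bound for the degrees of `Q` and `R` in the `j`-th variable, related to `η` and `ν` as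
`orderDegree` is to `ξ` and `μ`. -/
noncomputable def gosperDegree (j : Fin 3) : ℕ :=
  max (degreeOf j (toY H.β) + ∑ m, (H.a' m * degreeOf j (H.A m) + H.v' m * degreeOf j (H.V m)))
    (∑ m, (H.u' m * degreeOf j (H.U m) + H.b' m * degreeOf j (H.B m)))

theorem degreeOf_A_le_one {j : Fin 3} (hj : j ≠ 1) (m : Fin H.M) : degreeOf j (H.A m) ≤ 1 :=
  degreeOf_natCast_mul_X_add_add_toY_le_one hj 0 2 _ _ _

theorem degreeOf_B_le_one {j : Fin 3} (hj : j ≠ 1) (m : Fin H.M) : degreeOf j (H.B m) ≤ 1 :=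
  degreeOf_natCast_mul_X_sub_add_toY_le_one hj 0 2 _ _ _

theorem degreeOf_U_le_one {j : Fin 3} (hj : j ≠ 1) (m : Fin H.M) : degreeOf j (H.U m) ≤ 1 :=
  degreeOf_natCast_mul_X_add_add_toY_le_one hj 0 2 _ _ _

theorem degreeOf_V_le_one {j : Fin 3} (hj : j ≠ 1) (m : Fin H.M) : degreeOf j (H.V m) ≤ 1 :=
  degreeOf_natCast_mul_X_sub_add_toY_le_one hj 0 2 _ _ _

theorem orderDegree_le_μ {j : Fin 3} (hj : j ≠ 1) : H.orderDegree j ≤ H.μ := by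
  rw [orderDegree, degreeOf_toY_of_ne hj, zero_add]
  exact max_le_max
    (sum_mul_add_mul_le_sum_add H.a H.b (fun m _ => H.degreeOf_A_le_one hj m)
      fun m _ => H.degreeOf_B_le_one hj m)
    (sum_mul_add_mul_le_sum_add H.u H.v (fun m _ => H.degreeOf_U_le_one hj m)
      fun m _ => H.degreeOf_V_le_one hj m)

theorem gosperDegree_le_ν {j : Fin 3} (hj : j ≠ 1) : H.gosperDegree j ≤ H.ν := by
  rw [gosperDegree, degreeOf_toY_of_ne hj, zero_add]
  exact max_le_max
    (sum_mul_add_mul_le_sum_add H.a' H.v' (fun m _ => H.degreeOf_A_le_one hj m)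
      fun m _ => H.degreeOf_V_le_one hj m)
    (sum_mul_add_mul_le_sum_add H.u' H.b' (fun m _ => H.degreeOf_U_le_one hj m)
      fun m _ => H.degreeOf_B_le_one hj m)

theorem orderDegree_one_le_ξ : H.orderDegree 1 ≤ H.ξ :=
  max_le_max_right _ (Nat.add_le_add_right (degreeOf_one_toY_le H.α) _)

theorem gosperDegree_one_le_η : H.gosperDegree 1 ≤ H.η :=
  max_le_max_right _ (Nat.add_le_add_right (degreeOf_one_toY_le H.β) _)

theorem degreeOf_Pim_le (j : Fin 3) (i : ℕ) (m : Fin H.M) :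
    degreeOf j (H.Pim i m) ≤
      i * (H.a m * degreeOf j (H.A m) + H.b m * degreeOf j (H.B m)) +
        (H.r - i) * (H.u m * degreeOf j (H.U m) + H.v m * degreeOf j (H.V m)) := by
  have hA := degreeOf_risingFactorial_le_of_le (le_refl (degreeOf j (H.A m))) (i * H.a m)
  have hB := degreeOf_risingFactorial_le_of_le (le_refl (degreeOf j (H.B m))) (i * H.b m)
  have hU := degreeOf_risingFactorial_le_of_le (degreeOf_add_natCast_le j (H.U m) (i * H.u m))
    ((H.r - i) * H.u m)
  have hV := degreeOf_risingFactorial_le_of_le (degreeOf_add_natCast_le j (H.V m) (i * H.v m))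
    ((H.r - i) * H.v m)
  refine (degreeOf_mul_le_of_le (degreeOf_mul_le_of_le (degreeOf_mul_le_of_le hA hB) hU) hV).trans
    (le_of_eq ?_)
  ring

theorem degreeOf_α_pow_mul_prod_Pim_le (j : Fin 3) {i : ℕ} (hi : i ≤ H.r) :
    degreeOf j (toY H.α ^ i * ∏ m, H.Pim i m) ≤ H.r * H.orderDegree j := by
  calc degreeOf j (toY H.α ^ i * ∏ m, H.Pim i m)
      ≤ i * degreeOf j (toY H.α) +
          ∑ m, (i * (H.a m * degreeOf j (H.A m) + H.b m * degreeOf j (H.B m)) +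
            (H.r - i) * (H.u m * degreeOf j (H.U m) + H.v m * degreeOf j (H.V m))) :=
        degreeOf_mul_le_of_le (degreeOf_pow_le j _ i)
          (degreeOf_prod_le_of_le fun m _ => H.degreeOf_Pim_le j i m)
    _ = i * (degreeOf j (toY H.α) +
            ∑ m, (H.a m * degreeOf j (H.A m) + H.b m * degreeOf j (H.B m))) +
          (H.r - i) * ∑ m, (H.u m * degreeOf j (H.U m) + H.v m * degreeOf j (H.V m)) := by
        rw [Finset.sum_add_distrib, ← Finset.mul_sum, ← Finset.mul_sum, mul_add, add_assoc]
    _ ≤ i * H.orderDegree j + (H.r - i) * H.orderDegree j :=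
        add_le_add (Nat.mul_le_mul_left _ (le_max_left _ _))
          (Nat.mul_le_mul_left _ (le_max_right _ _))
    _ = H.r * H.orderDegree j := by rw [← add_mul, Nat.add_sub_cancel' hi]

theorem degreeOf_P_le (j : Fin 3) {c : ℕ → P3 C} {e : ℕ} (hc : ∀ i ≤ H.r, degreeOf j (c i) ≤ e) :
    degreeOf j (H.P c) ≤ e + degreeOf j H.p + H.r * H.orderDegree j := by
  refine degreeOf_sum_le_of_le fun i hi => ?_
  have hir : i ≤ H.r := Finset.mem_range_succ_iff.mp hi
  have regroup : c i * toY H.α ^ i * (⇑(SX3 C))^[i] H.p * ∏ m, H.Pim i m =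
      c i * (⇑(SX3 C))^[i] H.p * (toY H.α ^ i * ∏ m, H.Pim i m) := by ring
  rw [regroup]
  exact degreeOf_mul_le_of_le (degreeOf_mul_le_of_le (hc i hir) (degreeOf_SX3_iterate_le j i H.p))
    (H.degreeOf_α_pow_mul_prod_Pim_le j hir)

theorem degreeOf_Q_le (j : Fin 3) : degreeOf j H.Q ≤ H.gosperDegree j := by
  refine le_trans (degreeOf_mul_le_of_le le_rfl (degreeOf_prod_le_of_le fun m _ => ?_))
    (le_max_left _ _)
  exact degreeOf_mul_le_of_le (degreeOf_risingFactorial_le_of_le le_rfl (H.a' m))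
    (degreeOf_risingFactorial_le_of_le (degreeOf_add_natCast_sub_natCast_le j _ _ _) (H.v' m))

theorem degreeOf_R_le (j : Fin 3) : degreeOf j H.R ≤ H.gosperDegree j := by
  refine le_trans (degreeOf_prod_le_of_le fun m _ => ?_) (le_max_right _ _)
  exact degreeOf_mul_le_of_le
    (degreeOf_risingFactorial_le_of_le (degreeOf_add_natCast_sub_natCast_le j _ _ _) (H.u' m))
    (degreeOf_risingFactorial_le_of_le le_rfl (H.b' m))

theorem degreeOf_Q_mul_SK3_sub_R_mul_le (j : Fin 3) (Y : P3 C) :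
    degreeOf j (H.Q * SK3 C Y - H.R * Y) ≤ H.gosperDegree j + degreeOf j Y :=
  degreeOf_sub_le_of_le (degreeOf_mul_le_of_le (H.degreeOf_Q_le j) (degreeOf_SK3_le j Y))
    (degreeOf_mul_le_of_le (H.degreeOf_R_le j) le_rfl)

theorem degreeOf_P_sub_le {j : Fin 3} {c : ℕ → P3 C} {Y : P3 C} {e N K : ℕ}
    (hN : H.orderDegree j ≤ N) (hK : H.gosperDegree j ≤ K)
    (hc : ∀ i ≤ H.r, degreeOf j (c i) ≤ e)
    (hY : (degreeOf j Y : ℤ) ≤ e + degreeOf j H.p + H.r * N - K) :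
    degreeOf j (H.P c - (H.Q * SK3 C Y - H.R * Y)) ≤ e + degreeOf j H.p + H.r * N := by
  have hKY : K + degreeOf j Y ≤ e + degreeOf j H.p + H.r * N := by
    zify
    exact le_sub_iff_add_le'.mp hY
  refine degreeOf_sub_le_of_le ?_ ?_
  · exact (H.degreeOf_P_le j hc).trans (by gcongr)
  · exact (H.degreeOf_Q_mul_SK3_sub_R_mul_le j Y).trans ((Nat.add_le_add_right hK _).trans hKY)

end HyperData

open HyperData in
/-- Lemma 2 (degree bounds for `P − (Q·S_k(Y) − R·Y)`): if the coefficients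
`c_0, …, c_r ∈ C[x,y]` have `x`-degree `≤ d` and `y`-degree `≤ h`, and
`Y ∈ C[x,y,k]` satisfies `deg_x Y ≤ d + θ_x + rμ − ν`, `deg_y Y ≤ h + θ_y + rξ − η`,
`deg_k Y ≤ θ_k + rμ − ν`, then `P − (Q·S_k(Y) − R·Y)` has `x`-degree `≤ d + θ_x + rμ`,
`y`-degree `≤ h + θ_y + rξ`, `k`-degree `≤ θ_k + rμ`, and consequently at most
`(d + θ_x + rμ + 1)(h + θ_y + rξ + 1)(θ_k + rμ + 1)` nonzero monomials. -/
theorem degree_bounds_for_P_minus_QSkY_plus_RY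
    (C : Type*) [Field C] [CharZero C] (H : HyperData C) (d h : ℕ)
    (c : ℕ → P3 C)
    (hck : ∀ i ≤ H.r, degreeOf 2 (c i) = 0)
    (hcd : ∀ i ≤ H.r, degreeOf 0 (c i) ≤ d)
    (hch : ∀ i ≤ H.r, degreeOf 1 (c i) ≤ h)
    (Y : P3 C)
    (hYx : (degreeOf 0 Y : ℤ) ≤ (d : ℤ) + H.θx + H.r * H.μ - H.ν)
    (hYy : (degreeOf 1 Y : ℤ) ≤ (h : ℤ) + H.θy + H.r * H.ξ - H.η)
    (hYk : (degreeOf 2 Y : ℤ) ≤ (H.θk : ℤ) + H.r * H.μ - H.ν) :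
    degreeOf 0 (H.P c - (H.Q * SK3 C Y - H.R * Y)) ≤ d + H.θx + H.r * H.μ ∧
    degreeOf 1 (H.P c - (H.Q * SK3 C Y - H.R * Y)) ≤ h + H.θy + H.r * H.ξ ∧
    degreeOf 2 (H.P c - (H.Q * SK3 C Y - H.R * Y)) ≤ H.θk + H.r * H.μ ∧
    (H.P c - (H.Q * SK3 C Y - H.R * Y)).support.card ≤
      (d + H.θx + H.r * H.μ + 1) * (h + H.θy + H.r * H.ξ + 1) * (H.θk + H.r * H.μ + 1) := by
  have hx := H.degreeOf_P_sub_le (H.orderDegree_le_μ (by decide)) (H.gosperDegree_le_ν (by decide))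
    hcd hYx
  have hy := H.degreeOf_P_sub_le H.orderDegree_one_le_ξ H.gosperDegree_one_le_η hch hYy
  have hk : degreeOf 2 (H.P c - (H.Q * SK3 C Y - H.R * Y)) ≤ H.θk + H.r * H.μ := by
    simpa only [θk, zero_add] using H.degreeOf_P_sub_le (e := 0) (H.orderDegree_le_μ (by decide))
      (H.gosperDegree_le_ν (by decide)) (fun i hi => (hck i hi).le)
      (by simpa only [θk, Nat.cast_zero, zero_add] using hYk)
  refine ⟨hx, hy, hk, (card_support_le_prod_degreeOf_add_one _).trans ?_⟩
  rw [Fin.prod_univ_three]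
  gcongr <;> assumption
end

section
/- (Univariate order–degree curve for contraction ideals, differential case, one removable operator.) Let L = Σ_{i=0}^{ρ} (l_i·)∘D^i with l_i ∈ C[x] and l_ρ ≠ 0, and set d_L = max_i deg l_i. Let L_1 = Σ_{i=0}^{ρ_1} (l'_i·)∘D^i with l'_i ∈ C[x] and l'_{ρ_1} ≠ 0, where ρ_1 > ρ. Let p ∈ C[x] be nonzero and let P = Σ_{i=0}^{s} (P_i·)∘D^i with P_i ∈ C[x] and P_s ≠ 0, such that (p·)∘L_1 = P∘L as C-linear endomorphisms of C(x), and suppose deg p > deg P_s. Let r, d ∈ ℕ with r ≥ ρ_1 and (r + 1 − ρ)·(d − d_L) + (r + 1 − ρ_1)·(deg p − deg P_s) ≥ 0, i.e. d ≥ d_L − (1 − (ρ_1 − ρ)/(r + 1 − ρ))·(deg p − deg P_s). Then there exist polynomials b_0, …, b_r ∈ C[x], not all zero, with deg b_i ≤ d, and rational functions q_0, …, q_{r−ρ} ∈ C(x), such that Σ_{i=0}^{r} (b_i·)∘D^i = (Σ_{j=0}^{r−ρ} (q_j·)∘D^j) ∘ L as C-linear endomorphisms of C(x); that is, the contraction ideal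 Con⟨L⟩ = ⟨L⟩ ∩ C[x][D] contains a nonzero element of order at most r and degree at most d. -/
noncomputable section

/-- `C(x)`, the fraction field of `C[x]`. -/
abbrev K1 (C : Type*) [Field C] := FractionRing (Polynomial C)

/-- The canonical embedding `C[x] → C(x)`. -/
def embK1 {C : Type*} [Field C] (f : Polynomial C) : K1 C :=
  algebraMap (Polynomial C) (K1 C) f

/-- Multiplication by `q ∈ C(x)` as a `C`-linear endomorphism of `C(x)`. -/
def mulK1 {C : Type*} [Field C] (q : K1 C) : Module.End C (K1 C) :=
  LinearMap.mulLeft C q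

/-- The operator `Σ_{i=0}^{n} (q_i ·) ∘ D^i` as a `C`-linear endomorphism of `C(x)`. -/
def opK1 {C : Type*} [Field C] (D : Module.End C (K1 C)) (q : ℕ → K1 C) (n : ℕ) :
    Module.End C (K1 C) :=
  ∑ i ∈ Finset.range (n + 1), mulK1 (q i) ∘ₗ (D ^ i)

/-!
An operator `∑ aᵢ Dⁱ` with coefficients in `A = C[x]` is encoded by its symbol `∑ aᵢ Yⁱ ∈ A[Y]`;
composition of operators becomes the product of the Ore algebra `A[Y; d/dx]`. From `p L₁ = P L`,
differentiating `k` times gives `pᵏ⁺¹ Dᵏ L₁ = Qₖ L` with `Qₖ` of order `s + k` and leading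
coefficient `pᵏ lc P`. So with `m = r + 1 - ρ₁` and `q = p ^ m`, the `s + m` symbols

  `q Yʲ` for `j < s`,  `p ^ (m - 1 - k) Qₖ` for `k < m`

all lie in the `A`-lattice of those `w` with `w L ∈ q A[Y]`, and they have distinct orders, so the
degree of their determinant is `s m deg p + m ((m - 1) deg p + deg lc P)`. By Minkowski's theorem
over `C[x]` the lattice contains a nonzero `w` whose coefficients have degree at most `e` once this
number is less than `(s + m) (e + 1)`. Then `w L / q` is a polynomial operator of degree at most
`e + d_L - m deg p`, and the inequality defining the curve is what makes this at most `d`.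
-/

open Polynomial

section Symbols

section SkewEval

variable {k A V : Type*} [CommSemiring k] [Semiring A] [AddCommMonoid V] [Module k V] [Module A V]
  [SMulCommClass k A V]

/-- The operator `∑ aᵢ • Tⁱ` attached to the symbol `∑ aᵢ Yⁱ`: a polynomial evaluated at `T` with
its coefficients written on the left, which need not commute with `T`. -/
def skewEval (T : Module.End k V) : A[X] →ₗ[A] Module.End k V :=
  lsum fun i => LinearMap.toSpanSingleton A (Module.End k V) (T ^ i)

theorem skewEval_apply (T : Module.End k V) (f : A[X]) :
    skewEval T f = f.sum fun i a => a • T ^ i := rfl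

@[simp]
theorem skewEval_monomial (T : Module.End k V) (i : ℕ) (a : A) :
    skewEval T (monomial i a) = a • T ^ i :=
  (skewEval_apply T _).trans (sum_monomial_index a _ (zero_smul A _))

theorem skewEval_eq_sum_range (T : Module.End k V) {f : A[X]} {n : ℕ} (hf : f.natDegree < n) :
    skewEval T f = ∑ i ∈ Finset.range n, f.coeff i • T ^ i := by
  rw [skewEval_apply, sum_over_range' f (fun i => zero_smul A (T ^ i)) n hf]

end SkewEval

variable {k A V : Type*} [CommRing k] [CommRing A] [Algebra k A]
  [AddCommGroup V] [Module k V] [Module A V]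

/-- The derivation `δ` of `A`, extended to symbols coefficient by coefficient. -/
def coeffDerivation (δ : Derivation k A A) : Derivation k A[X] A[X] :=
  PolynomialModule.equivPolynomialSelf.compDer δ.mapCoeffs

@[simp]
theorem coeff_coeffDerivation (δ : Derivation k A A) (f : A[X]) (i : ℕ) :
    (coeffDerivation δ f).coeff i = δ (f.coeff i) := rfl

theorem degree_coeffDerivation_le (δ : Derivation k A A) (f : A[X]) :
    (coeffDerivation δ f).degree ≤ f.degree :=
  degree_mono fun i hi => by
    contrapose! hi
    simp [notMem_support_iff.1 hi]

/-- Composition with the derivation on the left, on symbols: the commutation rule `Y a = a Y + δ a`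
makes `Y · ∑ aᵢ Yⁱ` equal to `∑ aᵢ Yⁱ⁺¹ + ∑ δ(aᵢ) Yⁱ`. -/
def oreShift (δ : Derivation k A A) : Module.End k A[X] :=
  LinearMap.mulLeft k X + (coeffDerivation δ : A[X] →ₗ[k] A[X])

theorem oreShift_apply (δ : Derivation k A A) (f : A[X]) :
    oreShift δ f = X * f + coeffDerivation δ f := rfl

/-- The product in the Ore algebra `A[Y; δ]`, carried by the additive group of `A[X]`. -/
def oreMul (δ : Derivation k A A) (f g : A[X]) : A[X] :=
  skewEval (oreShift δ) f g

/-- `T` is a pseudo-linear endomorphism over the derivation `δ`, i.e. `(V, T)` is a differential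
module over `(A, δ)`. -/
def IsPseudoLinear (δ : Derivation k A A) (T : Module.End k V) : Prop :=
  ∀ (a : A) (v : V), T (a • v) = a • T v + δ a • v

theorem isPseudoLinear_oreShift (δ : Derivation k A A) : IsPseudoLinear δ (oreShift δ) := by
  intro a f
  ext i
  cases i <;> simp [oreShift_apply, mul_comm, add_assoc]

variable {δ : Derivation k A A} {T : Module.End k V}

theorem IsPseudoLinear.pow_smul_of_apply_eq_one (hT : IsPseudoLinear δ T) {t : A} (ht : δ t = 1)
    (n : ℕ) (v : V) : (T ^ n) (t • v) = t • (T ^ n) v + n • (T ^ (n - 1)) v := by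
  induction n with
  | zero => simp
  | succ n ih =>
    rw [pow_succ', Module.End.mul_apply, ih, map_add, hT, ht, map_nsmul, Module.End.mul_apply]
    cases n with
    | zero => simp
    | succ n =>
      simp only [Nat.add_sub_cancel, pow_succ', Module.End.mul_apply]
      module

variable [SMulCommClass k A V]

theorem IsPseudoLinear.mul_skewEval (hT : IsPseudoLinear δ T) (f : A[X]) :
    T * skewEval T f = skewEval T (oreShift δ f) := by
  induction f using Polynomial.induction_on' with
  | add f g hf hg => simp only [map_add, mul_add, hf, hg]
  | monomial i a =>
    have hshift : oreShift δ (monomial i a) = monomial (i + 1) a + monomial i (δ a) := by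
      ext j
      cases j <;> simp [oreShift_apply, coeff_monomial, apply_ite δ]
    ext v
    simp [hshift, hT a, pow_succ']

theorem IsPseudoLinear.pow_mul_skewEval (hT : IsPseudoLinear δ T) (f : A[X]) (n : ℕ) :
    T ^ n * skewEval T f = skewEval T ((oreShift δ ^ n) f) := by
  induction n with
  | zero => simp
  | succ n ih => rw [pow_succ', mul_assoc, ih, hT.mul_skewEval, pow_succ', Module.End.mul_apply]

theorem IsPseudoLinear.skewEval_oreMul (hT : IsPseudoLinear δ T) (f g : A[X]) :
    skewEval T (oreMul δ f g) = skewEval T f * skewEval T g := by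
  induction f using Polynomial.induction_on' with
  | add f₁ f₂ h₁ h₂ =>
    simp only [oreMul, map_add, LinearMap.add_apply, add_mul] at h₁ h₂ ⊢
    rw [h₁, h₂]
  | monomial i a =>
    simp only [oreMul, skewEval_monomial, LinearMap.smul_apply, map_smul, smul_mul_assoc]
    rw [hT.pow_mul_skewEval]

theorem oreShift_oreMul (f g : A[X]) : oreShift δ (oreMul δ f g) = oreMul δ (oreShift δ f) g :=
  LinearMap.congr_fun ((isPseudoLinear_oreShift δ).mul_skewEval f) g

theorem sum_oreMul {ι : Type*} (s : Finset ι) (f : ι → A[X]) (g : A[X]) :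
    oreMul δ (∑ j ∈ s, f j) g = ∑ j ∈ s, oreMul δ (f j) g := by
  simp only [oreMul, map_sum, LinearMap.sum_apply]

theorem smul_oreMul (a : A) (f g : A[X]) : oreMul δ (a • f) g = a • oreMul δ f g := by
  simp only [oreMul, map_smul, LinearMap.smul_apply]

theorem sub_oreMul (f₁ f₂ g : A[X]) :
    oreMul δ (f₁ - f₂) g = oreMul δ f₁ g - oreMul δ f₂ g := by
  simp only [oreMul, map_sub, LinearMap.sub_apply]

theorem IsPseudoLinear.skewEval_apply_smul (hT : IsPseudoLinear δ T) {t : A} (ht : δ t = 1)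
    (f : A[X]) (v : V) :
    skewEval T f (t • v) = t • skewEval T f v + skewEval T (derivative f) v := by
  induction f using Polynomial.induction_on' with
  | add f g hf hg =>
    simp only [map_add, LinearMap.add_apply, hf, hg, smul_add]
    abel
  | monomial i a =>
    simp only [derivative_monomial, skewEval_monomial, LinearMap.smul_apply,
      hT.pow_smul_of_apply_eq_one ht, smul_add, smul_comm t a]
    rw [mul_smul, Nat.cast_smul_eq_nsmul]

-- By induction on the order: the commutator with `t` acts on symbols as `d/dY`.
theorem IsPseudoLinear.skewEval_injective [IsAddTorsionFree A] [FaithfulSMul A V]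
    (hT : IsPseudoLinear δ T) {t : A} (ht : δ t = 1) :
    Function.Injective (skewEval (A := A) T) := by
  rw [injective_iff_map_eq_zero]
  intro f hf
  induction hn : f.natDegree using Nat.strong_induction_on generalizing f with
  | _ n ih =>
    have hderiv : skewEval T (derivative f) = 0 := by
      ext v
      simpa [hf] using (hT.skewEval_apply_smul ht f v).symm
    have hconst : f.natDegree = 0 := by
      by_contra hpos
      exact hpos (derivative_eq_zero.1 (ih _ (hn ▸ natDegree_derivative_lt hpos) _ hderiv rfl))
    rw [eq_C_of_natDegree_eq_zero hconst, ← monomial_zero_left, skewEval_monomial] at hf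
    have hcoeff : f.coeff 0 = 0 := FaithfulSMul.eq_of_smul_eq_smul (α := V) fun v => by
      simpa using LinearMap.congr_fun hf v
    rw [eq_C_of_natDegree_eq_zero hconst, hcoeff, C_0]

theorem degree_coeffDerivation_lt_degree_X_mul (δ : Derivation k A A) {f : A[X]} (hf : f ≠ 0) :
    (coeffDerivation δ f).degree < (X * f).degree := by
  have : Nontrivial A := Polynomial.nontrivial_iff.1 ⟨f, 0, hf⟩
  rw [X_mul]
  exact (degree_coeffDerivation_le δ f).trans_lt (degree_lt_degree_mul_X hf)

theorem degree_oreShift [Nontrivial A] (δ : Derivation k A A) (f : A[X]) :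
    (oreShift δ f).degree = f.degree + 1 := by
  rcases eq_or_ne f 0 with rfl | hf
  · simp
  rw [oreShift_apply, degree_add_eq_left_of_degree_lt (degree_coeffDerivation_lt_degree_X_mul δ hf),
    X_mul, degree_mul_X]

theorem leadingCoeff_oreShift (δ : Derivation k A A) (f : A[X]) :
    (oreShift δ f).leadingCoeff = f.leadingCoeff := by
  rcases eq_or_ne f 0 with rfl | hf
  · simp
  rw [oreShift_apply,
    leadingCoeff_add_of_degree_lt' (degree_coeffDerivation_lt_degree_X_mul δ hf), X_mul,
    leadingCoeff_mul_X]

theorem degree_oreShift_pow [Nontrivial A] (δ : Derivation k A A) (f : A[X]) (n : ℕ) :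
    ((oreShift δ ^ n) f).degree = f.degree + n := by
  induction n with
  | zero => simp
  | succ n ih =>
    rw [pow_succ', Module.End.mul_apply, degree_oreShift, ih, Nat.cast_succ, add_assoc]

theorem degree_oreMul [IsDomain A] (δ : Derivation k A A) (f g : A[X]) :
    (oreMul δ f g).degree = f.degree + g.degree := by
  rcases eq_or_ne g 0 with rfl | hg
  · simp [oreMul]
  have hterm : ∀ i ∈ f.support, (f.coeff i • (oreShift δ ^ i) g).degree = i + g.degree := by
    intro i hi
    rw [smul_eq_C_mul, degree_C_mul (mem_support_iff.1 hi), degree_oreShift_pow, add_comm]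
  have hsup : (f.support.sup fun i => (i : WithBot ℕ) + g.degree) = f.degree + g.degree := by
    rcases eq_or_ne f 0 with rfl | hf
    · simp
    refine le_antisymm (Finset.sup_le fun i hi => ?_) ?_
    · gcongr
      exact le_degree_of_mem_supp i hi
    · rw [degree_eq_natDegree hf]
      exact Finset.le_sup (f := fun i : ℕ => (i : WithBot ℕ) + g.degree)
        (natDegree_mem_support_of_nonzero hf)
  rw [oreMul, skewEval_apply, sum_def, LinearMap.sum_apply]
  simp only [LinearMap.smul_apply]
  rw [degree_sum_eq_of_disjoint, Finset.sup_congr rfl hterm, hsup]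
  rintro i ⟨hi, -⟩ j ⟨hj, -⟩ hij heq
  rw [Function.comp_apply, Function.comp_apply, hterm i hi, hterm j hj,
    degree_eq_natDegree hg] at heq
  have heq' : i + g.natDegree = j + g.natDegree := by exact_mod_cast heq
  exact hij (Nat.add_right_cancel heq')

theorem degree_smul_oreShift [IsDomain A] (δ : Derivation k A A) {p : A} (hp : p ≠ 0) (f : A[X]) :
    (p • oreShift δ f).degree = f.degree + 1 := by
  rw [smul_eq_C_mul, degree_C_mul hp, degree_oreShift]

theorem degree_smul_lt_degree_smul_oreShift [IsDomain A] (δ : Derivation k A A) {p : A}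
    (hp : p ≠ 0) (c : A) {f : A[X]} (hf : f ≠ 0) :
    (c • f).degree < (p • oreShift δ f).degree := by
  refine (degree_smul_le c f).trans_lt ?_
  rw [degree_smul_oreShift δ hp, degree_eq_natDegree hf]
  exact_mod_cast f.natDegree.lt_succ_self

theorem degree_smul_oreShift_sub_smul [IsDomain A] (δ : Derivation k A A) {p : A} (hp : p ≠ 0)
    (c : A) (f : A[X]) : (p • oreShift δ f - c • f).degree = f.degree + 1 := by
  rcases eq_or_ne f 0 with rfl | hf
  · simp
  rw [degree_sub_eq_left_of_degree_lt (degree_smul_lt_degree_smul_oreShift δ hp c hf),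
    degree_smul_oreShift δ hp]

theorem leadingCoeff_smul_oreShift_sub_smul [IsDomain A] (δ : Derivation k A A) {p : A}
    (hp : p ≠ 0) (c : A) (f : A[X]) :
    (p • oreShift δ f - c • f).leadingCoeff = p * f.leadingCoeff := by
  rcases eq_or_ne f 0 with rfl | hf
  · simp
  rw [leadingCoeff_sub_of_degree_lt (degree_smul_lt_degree_smul_oreShift δ hp c hf),
    smul_eq_C_mul, leadingCoeff_mul, leadingCoeff_C, leadingCoeff_oreShift]

theorem natDegree_oreMul [IsDomain A] (δ : Derivation k A A) {f g : A[X]} (hf : f ≠ 0)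
    (hg : g ≠ 0) : (oreMul δ f g).natDegree = f.natDegree + g.natDegree :=
  natDegree_eq_of_degree_eq_some <| by
    rw [degree_oreMul, degree_eq_natDegree hf, degree_eq_natDegree hg, Nat.cast_add]

theorem natDegree_eq_add_of_smul_eq_oreMul [IsDomain A] {q : A} (hq : q ≠ 0) {b f g : A[X]}
    (hf : f ≠ 0) (hg : g ≠ 0) (h : q • b = oreMul δ f g) :
    b.natDegree = f.natDegree + g.natDegree := by
  rw [← natDegree_oreMul δ hf hg, ← h, smul_eq_C_mul, natDegree_C_mul hq]

theorem exists_pow_smul_oreShift_pow_eq_oreMul [IsDomain A] {p : A} (hp : p ≠ 0) {P g ℓ : A[X]}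
    (h : p • g = oreMul δ P ℓ) (n : ℕ) :
    ∃ Q : A[X], Q.degree = P.degree + n ∧ Q.leadingCoeff = p ^ n * P.leadingCoeff ∧
      p ^ (n + 1) • (oreShift δ ^ n) g = oreMul δ Q ℓ := by
  induction n with
  | zero => exact ⟨P, by simp, by simp, by simpa using h⟩
  | succ n ih =>
    obtain ⟨Q, hdeg, hlead, hQ⟩ := ih
    -- The second term cancels the contribution of the derivative of `p ^ (n + 1)`.
    refine ⟨p • oreShift δ Q - ((n + 1) * δ p) • Q, ?_, ?_, ?_⟩
    · rw [degree_smul_oreShift_sub_smul δ hp, hdeg, Nat.cast_succ, add_assoc]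
    · rw [leadingCoeff_smul_oreShift_sub_smul δ hp, hlead, pow_succ', mul_assoc]
    · have hshift : oreMul δ (oreShift δ Q) ℓ = p ^ (n + 1) • (oreShift δ ^ (n + 1)) g +
          ((n + 1) * p ^ n * δ p) • (oreShift δ ^ n) g := by
        rw [← oreShift_oreMul, ← hQ, isPseudoLinear_oreShift δ, pow_succ' (oreShift δ),
          Module.End.mul_apply, Derivation.leibniz_pow]
        simp [mul_assoc]
      rw [sub_oreMul, smul_oreMul, smul_oreMul, ← hQ, hshift]
      module

theorem exists_oreMul_family_degree_eq [IsDomain A] {p : A} (hp : p ≠ 0) {P g ℓ : A[X]}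
    (hP : P ≠ 0) (h : p • g = oreMul δ P ℓ) (n : ℕ) :
    ∃ G B : Fin (P.natDegree + (n + 1)) → A[X], (∀ j, (G j).degree = (j : ℕ)) ∧
      (∀ j, (G (Fin.castAdd (n + 1) j)).leadingCoeff = p ^ (n + 1)) ∧
      (∀ k, (G (Fin.natAdd P.natDegree k)).leadingCoeff = p ^ n * P.leadingCoeff) ∧
      ∀ j, p ^ (n + 1) • B j = oreMul δ (G j) ℓ := by
  choose Q hQdeg hQlead hQ using exists_pow_smul_oreShift_pow_eq_oreMul hp h
  refine ⟨Fin.append (fun j => monomial j (p ^ (n + 1))) fun k => p ^ (n - k : ℕ) • Q k,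
    Fin.append (fun j => (oreShift δ ^ (j : ℕ)) ℓ) fun k => (oreShift δ ^ (k : ℕ)) g,
    ?_, ?_, ?_, ?_⟩
  · refine Fin.addCases (fun j => ?_) fun k => ?_
    · simp [degree_monomial _ (pow_ne_zero _ hp)]
    · rw [Fin.append_right, smul_eq_C_mul, degree_C_mul (pow_ne_zero _ hp), hQdeg,
        degree_eq_natDegree hP, Fin.val_natAdd, Nat.cast_add]
  · simp
  · intro k
    rw [Fin.append_right, smul_eq_C_mul, leadingCoeff_mul, leadingCoeff_C, hQlead, ← mul_assoc,
      ← pow_add, Nat.sub_add_cancel (Nat.le_of_lt_succ k.2)]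
  · refine Fin.addCases (fun j => ?_) fun k => ?_
    · simp [oreMul]
    · rw [Fin.append_right, Fin.append_right, smul_oreMul, ← hQ, smul_smul, ← pow_add,
        ← add_assoc, Nat.sub_add_cancel (Nat.le_of_lt_succ k.2)]

end Symbols

section Lattice

open Module Matrix

variable {F : Type*} [Field F]

theorem associated_det_prod_smithNormalFormCoeffs {R M ι : Type*} [CommRing R] [IsDomain R]
    [IsPrincipalIdealRing R] [AddCommGroup M] [Module R M] [Fintype ι] (b : Basis ι R M)
    {f : M →ₗ[R] M} (hf : Function.Injective f) :
    Associated (LinearMap.det f)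
      (∏ i, Submodule.smithNormalFormCoeffs b (LinearMap.finrank_range_of_inj hf) i) := by
  classical
  set h := LinearMap.finrank_range_of_inj hf
  let b₁ := Submodule.smithNormalFormTopBasis b h
  let b₂ := Submodule.smithNormalFormBotBasis b h
  let e := b₁.equiv b₂ (Equiv.refl ι)
  have hdiag : (LinearMap.range f).subtype ∘ₗ ↑e =
      Matrix.toLin b₁ b₁ (Matrix.diagonal (Submodule.smithNormalFormCoeffs b h)) :=
    b₁.ext fun i => by
      simp [e, b₁, b₂, Matrix.toLin_self, Matrix.diagonal_apply,
        Submodule.smithNormalFormBotBasis_def]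
  rw [← Matrix.det_diagonal, ← LinearMap.det_toLin b₁, ← hdiag]
  exact LinearMap.associated_det_comp_equiv (LinearMap.range f).subtype
    (LinearEquiv.ofInjective f hf) e

theorem finite_quotient_range_of_injective {M ι : Type*} [AddCommGroup M] [Module F[X] M]
    [Module F M] [IsScalarTower F F[X] M] [Finite ι] (b : Basis ι F[X] M)
    {f : M →ₗ[F[X]] M} (hf : Function.Injective f) : Module.Finite F (M ⧸ LinearMap.range f) := by
  have := Fintype.ofFinite ι
  have h := LinearMap.finrank_range_of_inj hf
  have (i : ι) : Module.Finite F (F[X] ⧸ Ideal.span {Submodule.smithNormalFormCoeffs b h i}) :=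
    (AdjoinRoot.powerBasis (Submodule.smithNormalFormCoeffs_ne_zero b h i)).finite
  exact Module.Finite.equiv (Submodule.quotientEquivDirectSum F b h).symm

theorem finrank_quotient_range_eq_natDegree_det {M ι : Type*} [AddCommGroup M] [Module F[X] M]
    [Module F M] [IsScalarTower F F[X] M] [Finite ι] (b : Basis ι F[X] M)
    {f : M →ₗ[F[X]] M} (hf : Function.Injective f) :
    finrank F (M ⧸ LinearMap.range f) = (LinearMap.det f).natDegree := by
  have := Fintype.ofFinite ι
  have h := LinearMap.finrank_range_of_inj hf
  have hne := Submodule.smithNormalFormCoeffs_ne_zero b h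
  have (i : ι) : Module.Finite F (F[X] ⧸ Ideal.span {Submodule.smithNormalFormCoeffs b h i}) :=
    (AdjoinRoot.powerBasis (hne i)).finite
  rw [Submodule.finrank_quotient_eq_sum F b h,
    natDegree_eq_of_degree_eq (degree_eq_degree_of_associated
      (associated_det_prod_smithNormalFormCoeffs b hf)), natDegree_prod _ _ fun i _ => hne i]
  simp only [finrank_quotient_span_eq_natDegree]

/-- Minkowski's theorem for the lattice `F[X]ⁿ A` and the box of vectors of degree at most `e`:
the box has larger dimension over `F` than the quotient of `F[X]ⁿ` by the lattice. -/
theorem exists_vecMul_natDegree_le {ι : Type*} [Fintype ι] [DecidableEq ι] {A : Matrix ι ι F[X]}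
    (hA : A.det ≠ 0) {e : ℕ} (he : A.det.natDegree < Fintype.card ι * (e + 1)) :
    ∃ a : ι → F[X], a ᵥ* A ≠ 0 ∧ ∀ i, ((a ᵥ* A) i).natDegree ≤ e := by
  have hinj : Function.Injective (Matrix.toLin' Aᵀ) := by
    rw [injective_iff_map_eq_zero]
    intro v hv
    exact Matrix.eq_zero_of_mulVec_eq_zero (by rwa [det_transpose]) hv
  have := finite_quotient_range_of_injective (Pi.basisFun F[X] ι) hinj
  have hdim := finrank_quotient_range_eq_natDegree_det (F := F) (Pi.basisFun F[X] ι) hinj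
  let box : (ι → degreeLT F (e + 1)) →ₗ[F] ι → F[X] := (degreeLT F (e + 1)).subtype.compLeft ι
  have : FiniteDimensional F (degreeLT F (e + 1)) :=
    Module.Finite.equiv (degreeLTEquiv F _).symm
  let φ := ((LinearMap.range (Matrix.toLin' Aᵀ)).mkQ.restrictScalars F) ∘ₗ box
  have hker : LinearMap.ker φ ≠ ⊥ := LinearMap.ker_ne_bot_of_finrank_lt <| by
    simpa [hdim, finrank_pi_fintype, (degreeLTEquiv F (e + 1)).finrank_eq] using he
  obtain ⟨w, hw, hw0⟩ := Submodule.exists_mem_ne_zero_of_ne_bot hker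
  obtain ⟨a, ha⟩ : box w ∈ LinearMap.range (Matrix.toLin' Aᵀ) := by
    simpa [φ] using hw
  rw [Matrix.toLin'_apply, Matrix.mulVec_transpose] at ha
  refine ⟨a, ?_, fun i => ?_⟩
  · rw [ha]
    exact fun h => hw0 (funext fun i => Subtype.ext (congrFun h i))
  · rw [ha]
    exact natDegree_le_of_degree_le (mem_degreeLE.1 (degreeLT_succ_eq_degreeLE.le (w i).2))

theorem exists_sum_smul_natDegree_coeff_le {N : ℕ} {G : Fin N → F[X][X]}
    (hG : ∀ j, (G j).degree = (j : ℕ)) {e : ℕ}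
    (he : ∑ j, (G j).leadingCoeff.natDegree < N * (e + 1)) :
    ∃ a : Fin N → F[X], ∑ j, a j • G j ≠ 0 ∧ ∀ i, ((∑ j, a j • G j).coeff i).natDegree ≤ e := by
  let A : Matrix (Fin N) (Fin N) F[X] := .of fun j i => (G j).coeff i
  have hcoeff (a : Fin N → F[X]) (i : Fin N) : (a ᵥ* A) i = (∑ j, a j • G j).coeff i := by
    simp [A, Matrix.vecMul, dotProduct]
  have hlead (j : Fin N) : (G j).coeff j = (G j).leadingCoeff := by
    rw [leadingCoeff, natDegree_eq_of_degree_eq_some (hG j)]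
  have hne (j : Fin N) : (G j).leadingCoeff ≠ 0 := by
    intro h0
    have := hG j
    simp [leadingCoeff_eq_zero.1 h0] at this
  have hdet : A.det = ∏ j, (G j).leadingCoeff := by
    rw [Matrix.det_of_isLowerTriangular]
    · simp [A, hlead]
    · intro j i hij
      exact coeff_eq_zero_of_degree_lt (by rw [hG]; exact_mod_cast hij)
  obtain ⟨a, ha0, ha⟩ := exists_vecMul_natDegree_le (A := A) (e := e)
    (by rw [hdet]; exact Finset.prod_ne_zero_iff.2 fun j _ => hne j)
    (by rw [hdet, natDegree_prod _ _ fun j _ => hne j, Fintype.card_fin]; exact he)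
  refine ⟨a, fun h0 => ha0 (funext fun i => by simp [hcoeff, h0]), fun i => ?_⟩
  rcases lt_or_ge i N with hi | hi
  · exact hcoeff a ⟨i, hi⟩ ▸ ha ⟨i, hi⟩
  · have hzero (j : Fin N) : (G j).coeff i = 0 :=
      coeff_eq_zero_of_degree_lt (by rw [hG]; exact_mod_cast j.2.trans_le hi)
    simp [hzero]

end Lattice

section CoefficientDegrees

variable {R : Type*} [CommRing R]

theorem natDegree_coeff_oreShift_le {f : R[X][X]} {d : ℕ} (hf : ∀ i, (f.coeff i).natDegree ≤ d)
    (i : ℕ) : ((oreShift (derivative' (R := R)) f).coeff i).natDegree ≤ d := by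
  have hder : (derivative (f.coeff i)).natDegree ≤ d :=
    (natDegree_derivative_le _).trans ((Nat.sub_le _ _).trans (hf i))
  rw [oreShift_apply, coeff_add, coeff_coeffDerivation]
  refine natDegree_add_le_of_degree_le ?_ hder
  cases i with
  | zero => simp
  | succ i => simpa using hf i

theorem natDegree_coeff_oreShift_pow_le {f : R[X][X]} {d : ℕ}
    (hf : ∀ i, (f.coeff i).natDegree ≤ d) (n i : ℕ) :
    (((oreShift (derivative' (R := R)) ^ n) f).coeff i).natDegree ≤ d := by
  induction n generalizing i with
  | zero => exact hf i
  | succ n ih =>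
    rw [pow_succ', Module.End.mul_apply]
    exact natDegree_coeff_oreShift_le ih i

theorem natDegree_coeff_oreMul_le {f g : R[X][X]} {d e : ℕ} (hf : ∀ i, (f.coeff i).natDegree ≤ d)
    (hg : ∀ i, (g.coeff i).natDegree ≤ e) (i : ℕ) :
    ((oreMul (derivative' (R := R)) f g).coeff i).natDegree ≤ d + e := by
  rw [oreMul, skewEval_apply, sum_def, LinearMap.sum_apply, finsetSum_coeff]
  refine natDegree_sum_le_of_forall_le _ _ fun n _ => ?_
  rw [LinearMap.smul_apply, coeff_smul, smul_eq_mul]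
  exact natDegree_mul_le_of_le (hf n) (natDegree_coeff_oreShift_pow_le hg n i)

end CoefficientDegrees

section Curve

variable {F : Type*} [Field F]

theorem exists_smul_eq_oreMul_natDegree_coeff_le {N : ℕ} {q : F[X]} (hq : q ≠ 0) {ℓ : F[X][X]}
    (hℓ : ℓ ≠ 0) {G B : Fin N → F[X][X]} (hG : ∀ j, (G j).degree = (j : ℕ))
    (hGB : ∀ j, q • B j = oreMul derivative' (G j) ℓ) {d e : ℕ}
    (hd : ∀ i, (ℓ.coeff i).natDegree ≤ d)
    (he : ∑ j, (G j).leadingCoeff.natDegree < N * (e + 1)) :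
    ∃ w b : F[X][X], b ≠ 0 ∧ w.natDegree < N ∧ b.natDegree < N + ℓ.natDegree ∧
      q • b = oreMul derivative' w ℓ ∧ ∀ i, (q * b.coeff i).natDegree ≤ e + d := by
  obtain ⟨a, hw0, hw⟩ := exists_sum_smul_natDegree_coeff_le hG he
  set w := ∑ j, a j • G j
  have hwN : w.natDegree < N := by
    refine (natDegree_lt_iff_degree_lt hw0).2 (mem_degreeLT.1 ?_)
    refine Submodule.sum_mem _ fun j _ => Submodule.smul_mem _ _ (mem_degreeLT.2 ?_)
    rw [hG]
    exact_mod_cast j.2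
  have hfactor : q • ∑ j, a j • B j = oreMul derivative' w ℓ := by
    simp only [w, sum_oreMul, smul_oreMul, ← hGB, Finset.smul_sum, smul_comm q]
  have horder : (∑ j, a j • B j).natDegree = w.natDegree + ℓ.natDegree :=
    natDegree_eq_add_of_smul_eq_oreMul hq hw0 hℓ hfactor
  refine ⟨w, ∑ j, a j • B j, fun h0 => ?_, hwN, by lia, hfactor, fun i => ?_⟩
  · rw [h0, smul_zero] at hfactor
    have := degree_oreMul derivative' w ℓ
    rw [← hfactor, degree_zero, eq_comm, WithBot.add_eq_bot] at this
    simp [hw0, hℓ] at this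
  · rw [← smul_eq_mul, ← coeff_smul, hfactor]
    exact natDegree_coeff_oreMul_le hw hd i

theorem exists_smul_eq_oreMul_of_order_degree_curve {ℓ ℓ₁ P : F[X][X]} (hℓ : ℓ ≠ 0)
    (hP : P ≠ 0) {p : F[X]} (hp : p ≠ 0) (hfact : p • ℓ₁ = oreMul derivative' P ℓ) {dL d n : ℕ}
    (hdL : ∀ i, (ℓ.coeff i).natDegree ≤ dL)
    (hcurve : (P.natDegree + (n + 1)) * dL + (n + 1) * P.leadingCoeff.natDegree ≤
      (P.natDegree + (n + 1)) * d + (n + 1) * p.natDegree) :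
    ∃ (q : F[X]) (w b : F[X][X]), q ≠ 0 ∧ b ≠ 0 ∧ w.natDegree < P.natDegree + (n + 1) ∧
      b.natDegree < P.natDegree + (n + 1) + ℓ.natDegree ∧ (∀ i, (b.coeff i).natDegree ≤ d) ∧
      q • b = oreMul derivative' w ℓ := by
  obtain ⟨G, B, hG, hlead_left, hlead_right, hGB⟩ := exists_oreMul_family_degree_eq hp hP hfact n
  -- Multiplication by `ℓ` adds `dL` to the degree of the coefficients, division by `p ^ (n + 1)`
  -- removes `(n + 1) * p.natDegree`.
  obtain ⟨e, he⟩ : ∃ e, e + dL = (n + 1) * p.natDegree + d := by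
    refine ⟨(n + 1) * p.natDegree + d - dL, Nat.sub_add_cancel ?_⟩
    refine Nat.le_of_mul_le_mul_left (c := P.natDegree + (n + 1)) ?_ (by lia)
    nlinarith [Nat.zero_le ((P.natDegree + n) * ((n + 1) * p.natDegree))]
  have hsum : ∑ j, (G j).leadingCoeff.natDegree < (P.natDegree + (n + 1)) * (e + 1) := by
    simp only [Fin.sum_univ_add, hlead_left, hlead_right, natDegree_pow,
      natDegree_mul (pow_ne_zero n hp) (leadingCoeff_ne_zero.2 hP), Finset.sum_const,
      Finset.card_univ, Fintype.card_fin, smul_eq_mul]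
    have he_mul : (P.natDegree + (n + 1)) * (e + dL) =
        (P.natDegree + (n + 1)) * ((n + 1) * p.natDegree + d) := by rw [he]
    linarith
  obtain ⟨w, b, hb, hwN, hbN, hwb, hdeg⟩ :=
    exists_smul_eq_oreMul_natDegree_coeff_le (pow_ne_zero (n + 1) hp) hℓ hG hGB hdL hsum
  refine ⟨p ^ (n + 1), w, b, pow_ne_zero _ hp, hb, hwN, hbN, fun i => ?_, hwb⟩
  rcases eq_or_ne (b.coeff i) 0 with h0 | h0
  · simp [h0]
  · have := hdeg i
    rw [natDegree_mul (pow_ne_zero _ hp) h0, natDegree_pow, he] at this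
    exact Nat.le_of_add_le_add_left this

end Curve

section SymbolOfSequence

variable {R : Type*} [Semiring R]

/-- The symbol `∑_{i ≤ n} bᵢ Yⁱ` of the operator of order at most `n` with coefficients `bᵢ`. -/
def symbol (b : ℕ → R) (n : ℕ) : R[X] :=
  ∑ i ∈ Finset.range (n + 1), monomial i (b i)

theorem coeff_symbol (b : ℕ → R) (n i : ℕ) : (symbol b n).coeff i = if i ≤ n then b i else 0 := by
  simp [symbol, coeff_monomial]

theorem natDegree_coeff_symbol_le (b : ℕ → R[X]) (n i : ℕ) :
    ((symbol b n).coeff i).natDegree ≤ (Finset.range (n + 1)).sup fun j => (b j).natDegree := by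
  rw [coeff_symbol]
  split_ifs with hi
  · exact Finset.le_sup (f := fun j => (b j).natDegree) (Finset.mem_range_succ_iff.2 hi)
  · simp

theorem natDegree_symbol_le (b : ℕ → R) (n : ℕ) : (symbol b n).natDegree ≤ n :=
  natDegree_le_iff_coeff_eq_zero.2 fun i hi => by rw [coeff_symbol, if_neg hi.not_ge]

theorem natDegree_symbol {b : ℕ → R} {n : ℕ} (hb : b n ≠ 0) : (symbol b n).natDegree = n :=
  natDegree_eq_of_le_of_coeff_ne_zero (natDegree_symbol_le b n) (by simpa [coeff_symbol] using hb)

theorem leadingCoeff_symbol {b : ℕ → R} {n : ℕ} (hb : b n ≠ 0) :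
    (symbol b n).leadingCoeff = b n := by
  rw [leadingCoeff, natDegree_symbol hb, coeff_symbol, if_pos le_rfl]

theorem symbol_ne_zero {b : ℕ → R} {n : ℕ} (hb : b n ≠ 0) : symbol b n ≠ 0 :=
  leadingCoeff_ne_zero.1 (leadingCoeff_symbol hb ▸ hb)

end SymbolOfSequence

section RationalOperators

variable {C : Type*} [Field C] {D : Module.End C (K1 C)}

theorem isPseudoLinear_derivative (hLeib : ∀ a b : K1 C, D (a * b) = a * D b + D a * b)
    (hDext : ∀ f : C[X], D (embK1 f) = embK1 (derivative f)) :
    IsPseudoLinear (derivative' (R := C)) D := by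
  intro a v
  simpa only [Algebra.smul_def, embK1] using (hLeib (embK1 a) v).trans (by rw [hDext]; rfl)

theorem mulK1_embK1_comp (p : C[X]) (S : Module.End C (K1 C)) : mulK1 (embK1 p) ∘ₗ S = p • S := by
  ext v
  simp [mulK1, embK1, Algebra.smul_def]

theorem mulK1_comp_mulK1 (a b : K1 C) : mulK1 a ∘ₗ mulK1 b = mulK1 (a * b) :=
  (LinearMap.mulLeft_mul C (K1 C) a b).symm

theorem opK1_mul_left (D : Module.End C (K1 C)) (c : K1 C) (q : ℕ → K1 C) (n : ℕ) :
    opK1 D (fun i => c * q i) n = mulK1 c ∘ₗ opK1 D q n := by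
  simp only [opK1, ← mulK1_comp_mulK1, ← Module.End.mul_eq_comp, Finset.mul_sum, mul_assoc]

theorem opK1_embK1_coeff (D : Module.End C (K1 C)) {f : C[X][X]} {n : ℕ} (hf : f.natDegree ≤ n) :
    opK1 D (fun i => embK1 (f.coeff i)) n = skewEval D f := by
  simp only [opK1, mulK1_embK1_comp, skewEval_eq_sum_range D (Nat.lt_succ_of_le hf)]

theorem opK1_embK1 (D : Module.End C (K1 C)) (b : ℕ → C[X]) (n : ℕ) :
    opK1 D (fun i => embK1 (b i)) n = skewEval D (symbol b n) := by
  rw [← opK1_embK1_coeff D (natDegree_symbol_le b n)]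
  refine Finset.sum_congr rfl fun i hi => ?_
  simp only [coeff_symbol, if_pos (Finset.mem_range_succ_iff.1 hi)]

theorem smul_eq_oreMul_of_comp_eq [CharZero C] (hD : IsPseudoLinear (derivative' (R := C)) D)
    {p : C[X]} {ℓ₁ P ℓ : C[X][X]}
    (h : mulK1 (embK1 p) ∘ₗ skewEval D ℓ₁ = skewEval D P ∘ₗ skewEval D ℓ) :
    p • ℓ₁ = oreMul derivative' P ℓ :=
  hD.skewEval_injective (t := X) derivative_X <| by
    rw [map_smul, ← mulK1_embK1_comp, h, hD.skewEval_oreMul, Module.End.mul_eq_comp]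

theorem opK1_eq_comp_of_smul_eq_oreMul (hD : IsPseudoLinear (derivative' (R := C)) D)
    {q : C[X]} (hq : q ≠ 0) {b w ℓ : C[X][X]} (h : q • b = oreMul derivative' w ℓ) {r n : ℕ}
    (hb : b.natDegree ≤ r) (hw : w.natDegree ≤ n) :
    opK1 D (fun i => embK1 (b.coeff i)) r =
      opK1 D (fun i => (embK1 q)⁻¹ * embK1 (w.coeff i)) n ∘ₗ skewEval D ℓ := by
  have hq' : embK1 q ≠ 0 := by simpa [embK1] using hq
  rw [opK1_mul_left, opK1_embK1_coeff D hb, opK1_embK1_coeff D hw, LinearMap.comp_assoc,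
    ← Module.End.mul_eq_comp (skewEval D w), ← hD.skewEval_oreMul, ← h, map_smul,
    ← mulK1_embK1_comp, ← LinearMap.comp_assoc, mulK1_comp_mulK1, inv_mul_cancel₀ hq']
  ext v
  simp [mulK1]

end RationalOperators

/-- Univariate order–degree curve for contraction ideals (differential case, one
removable operator; Theorem 9 of Chen–Jaroschek–Kauers–Singer for `m = 1`).
Here `D` is the unique derivation of `C(x)` extending `d/dx` on `C[x]`.
If `p·L_1 = P∘L` with `deg p > deg (lc P)`, `r ≥ ρ_1`, and
`(r+1−ρ)(d−d_L) + (r+1−ρ_1)(deg p − deg P_s) ≥ 0`, then `Con⟨L⟩` contains a nonzero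
element of order at most `r` and degree at most `d`. -/
theorem contraction_ideal_order_degree_curve_univariate
    (C : Type*) [Field C] [CharZero C]
    (D : Module.End C (K1 C))
    (hLeib : ∀ a b : K1 C, D (a * b) = a * D b + D a * b)
    (hDext : ∀ f : Polynomial C, D (embK1 f) = embK1 (Polynomial.derivative f))
    -- the operator L of order ρ and its coefficient degrees
    (ρ : ℕ) (l : ℕ → Polynomial C) (hl : l ρ ≠ 0)
    (dL : ℕ) (hdL : dL = (Finset.range (ρ + 1)).sup fun i => (l i).natDegree)
    -- the operator L₁ ∈ Con⟨L⟩ of order ρ₁ > ρ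
    (ρ₁ : ℕ) (l' : ℕ → Polynomial C) (hl' : l' ρ₁ ≠ 0) (hρ : ρ < ρ₁)
    -- p and P with p·L₁ = P∘L and deg p > deg (lc P)
    (p : Polynomial C) (hp : p ≠ 0)
    (s : ℕ) (PP : ℕ → Polynomial C) (hPPs : PP s ≠ 0)
    (hfact : mulK1 (embK1 p) ∘ₗ opK1 D (fun i => embK1 (l' i)) ρ₁ =
      opK1 D (fun i => embK1 (PP i)) s ∘ₗ opK1 D (fun i => embK1 (l i)) ρ)
    (hdeg : (PP s).natDegree < p.natDegree)
    -- the point (r, d)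
    (r d : ℕ) (hr : ρ₁ ≤ r)
    (hineq : (0 : ℤ) ≤ ((r : ℤ) + 1 - ρ) * ((d : ℤ) - dL)
      + ((r : ℤ) + 1 - ρ₁) * ((p.natDegree : ℤ) - ((PP s).natDegree : ℤ))) :
    ∃ (b : ℕ → Polynomial C) (qq : ℕ → K1 C),
      (¬ ∀ i ≤ r, b i = 0) ∧
      (∀ i ≤ r, (b i).natDegree ≤ d) ∧
      opK1 D (fun i => embK1 (b i)) r =
        opK1 D qq (r - ρ) ∘ₗ opK1 D (fun i => embK1 (l i)) ρ := by
  have hD := isPseudoLinear_derivative hLeib hDext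
  have hℓ : symbol l ρ ≠ 0 := symbol_ne_zero hl
  have hP : symbol PP s ≠ 0 := symbol_ne_zero hPPs
  simp only [opK1_embK1 D l, opK1_embK1 D l', opK1_embK1 D PP] at hfact ⊢
  have hsymbol : p • symbol l' ρ₁ = oreMul derivative' (symbol PP s) (symbol l ρ) :=
    smul_eq_oreMul_of_comp_eq hD hfact
  obtain rfl : ρ₁ = s + ρ := by
    simpa only [natDegree_symbol hl, natDegree_symbol hl', natDegree_symbol hPPs] using
      natDegree_eq_add_of_smul_eq_oreMul hp hP hℓ hsymbol
  obtain ⟨n, rfl⟩ := Nat.exists_eq_add_of_le hr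
  have hcurve : (s + (n + 1)) * dL + (n + 1) * (PP s).natDegree ≤
      (s + (n + 1)) * d + (n + 1) * p.natDegree := by
    zify
    push_cast at hineq
    linarith
  obtain ⟨q, w, b, hq, hb, hw, hbr, hbd, hqb⟩ := exists_smul_eq_oreMul_of_order_degree_curve
    hℓ hP hp hsymbol (hdL ▸ natDegree_coeff_symbol_le l ρ)
    (by rwa [natDegree_symbol hPPs, leadingCoeff_symbol hPPs])
  simp only [natDegree_symbol hPPs, natDegree_symbol hl] at hw hbr
  exact ⟨b.coeff, fun i => (embK1 q)⁻¹ * embK1 (w.coeff i),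
    fun h => hb (leadingCoeff_eq_zero.1 (h _ (by lia))), fun i _ => hbd i,
    opK1_eq_comp_of_smul_eq_oreMul hD hq hqb (by lia) (by lia)⟩

end
end

section
/- Let p ∈ C[x] be nonzero and let P = Σ_{j=0}^{s} (P_j·)∘D^j with P_j ∈ C[x], P_s ≠ 0, and deg P_s < deg p. Let Q_0 = Σ_{i=0}^{e} (q_i·)∘D^i with q_i ∈ C[x], and let Q_1 = Σ_{i=0}^{e'} (t_i·)∘D^i with t_i ∈ C[x] and deg t_i ≤ deg p − deg P_s − 1 for all i. If Q_0 + Q_1 ∘ ((1/p)·) ∘ P = 0 as a C-linear endomorphism of C(x), then q_i = 0 for all i and t_i = 0 for all i. -/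
/-!
Orders add up and leading coefficients multiply under composition of differential operators.
Hence if `Q₁` has leading coefficient `t ≠ 0`, then `Q₁ ∘ (1/p) ∘ P` has leading coefficient
`t * P_s / p`, which is not a polynomial since `deg (t * P_s) < deg p`. It therefore cannot be
cancelled by `Q₀`, so `Q₁ = 0`, and then `Q₀ = 0`. The coefficients of an operator are well defined
because the powers of `D` are linearly independent over `C(x)`.
-/

noncomputable section

section DifferentialOperators

variable {C A : Type*} [CommSemiring C] [CommRing A] [Algebra C A]

/-- The left `A`-module of differential operators `∑ i < n, (a i ·) ∘ D ^ i` of order less than `n`.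
That an operator `P` of order at most `n` has `a` as coefficient of `D ^ n` is expressed by
`P ≡ a • D ^ n [SMOD operatorsOfOrderLT D n]`; here `a` may be zero. -/
def operatorsOfOrderLT (D : Module.End C A) (n : ℕ) : Submodule A (Module.End C A) :=
  Submodule.span A ((D ^ ·) '' Set.Iio n)

theorem operatorsOfOrderLT_mono (D : Module.End C A) : Monotone (operatorsOfOrderLT D) :=
  fun _ _ h ↦ Submodule.span_mono (Set.image_mono (Set.Iio_subset_Iio h))

theorem pow_mem_operatorsOfOrderLT (D : Module.End C A) {i n : ℕ} (h : i < n) :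
    D ^ i ∈ operatorsOfOrderLT D n :=
  Submodule.subset_span ⟨i, h, rfl⟩

theorem sum_smul_pow_mem_operatorsOfOrderLT (D : Module.End C A) (a : ℕ → A) {u : Finset ℕ} {n : ℕ}
    (hu : ∀ i ∈ u, i < n) : ∑ i ∈ u, a i • D ^ i ∈ operatorsOfOrderLT D n :=
  Submodule.sum_mem _ fun i hi ↦ Submodule.smul_mem _ _ (pow_mem_operatorsOfOrderLT D (hu i hi))

theorem sum_insert_smodEq_smul_pow (D : Module.End C A) (a : ℕ → A) {u : Finset ℕ} {n : ℕ}
    (hu : ∀ i ∈ u, i < n) :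
    ∑ i ∈ insert n u, a i • D ^ i ≡ a n • D ^ n [SMOD operatorsOfOrderLT D n] := by
  rw [Finset.sum_insert fun h ↦ (hu n h).false, SModEq.sub_mem, add_sub_cancel_left]
  exact sum_smul_pow_mem_operatorsOfOrderLT D a hu

theorem mem_operatorsOfOrderLT_succ_of_smodEq {D P : Module.End C A} {a : A} {n : ℕ}
    (hP : P ≡ a • D ^ n [SMOD operatorsOfOrderLT D n]) : P ∈ operatorsOfOrderLT D (n + 1) := by
  rw [← sub_add_cancel P (a • D ^ n)]
  exact add_mem (operatorsOfOrderLT_mono D n.le_succ (SModEq.sub_mem.mp hP))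
    (Submodule.smul_mem _ a (pow_mem_operatorsOfOrderLT D n.lt_succ_self))

theorem exists_leading_term_sum_smul_pow (D : Module.End C A) {a : ℕ → A} {u : Finset ℕ}
    (ha : ∃ i ∈ u, a i ≠ 0) :
    ∃ n ∈ u, a n ≠ 0 ∧ ∑ i ∈ u, a i • D ^ i ≡ a n • D ^ n [SMOD operatorsOfOrderLT D n] := by
  induction u using Finset.induction_on_max with
  | empty => simp at ha
  | insert n u hu ih =>
    by_cases hn : a n = 0
    · have ha' : ∃ i ∈ u, a i ≠ 0 := by simpa [hn] using ha
      obtain ⟨m, hm, ham, hlead⟩ := ih ha'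
      refine ⟨m, Finset.mem_insert_of_mem hm, ham, ?_⟩
      rwa [Finset.sum_insert fun h ↦ (hu n h).false, hn, zero_smul, zero_add]
    · exact ⟨n, Finset.mem_insert_self n u, hn, sum_insert_smodEq_smul_pow D a hu⟩

theorem coeff_eq_of_sum_smul_pow_smodEq {D : Module.End C A}
    (hD : LinearIndependent A fun i : ℕ ↦ D ^ i) {a : ℕ → A} {u : Finset ℕ} {c : A} {n : ℕ}
    (h : ∑ i ∈ u, a i • D ^ i ≡ c • D ^ n [SMOD operatorsOfOrderLT D n]) :
    (if n ∈ u then a n else 0) = c := by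
  obtain ⟨g, hg, hsum⟩ :=
    (Finsupp.mem_span_image_iff_linearCombination A).mp (SModEq.sub_mem.mp h)
  have hgn : g n = 0 := (Finsupp.mem_supported' A g).mp hg n (lt_irrefl n)
  have heq : ∑ i ∈ u, Finsupp.single i (a i) = g + Finsupp.single n c := hD (by simp [hsum])
  simpa [Finsupp.finsetSum_apply, Finsupp.single_apply, hgn] using DFunLike.congr_fun heq n

theorem derivation_mul_smul (D : Derivation C A A) (a : A) (P : Module.End C A) :
    D.toLinearMap * a • P = a • (D.toLinearMap * P) + D a • P := by
  ext z
  simp [mul_comm]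

theorem derivation_mul_mem_operatorsOfOrderLT {D : Derivation C A A} {P : Module.End C A} {n : ℕ}
    (hP : P ∈ operatorsOfOrderLT D.toLinearMap n) :
    D.toLinearMap * P ∈ operatorsOfOrderLT D.toLinearMap (n + 1) := by
  induction hP using Submodule.span_induction with
  | mem P hP =>
    obtain ⟨i, hi, rfl⟩ := hP
    simpa only [pow_succ'] using pow_mem_operatorsOfOrderLT D.toLinearMap (Nat.succ_lt_succ hi)
  | zero => simp
  | add P Q _ _ hP hQ => simpa only [mul_add] using add_mem hP hQ
  | smul a P hP hDP =>
    rw [derivation_mul_smul]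
    exact add_mem (Submodule.smul_mem _ a hDP)
      (Submodule.smul_mem _ (D a) (operatorsOfOrderLT_mono _ n.le_succ hP))

theorem derivation_mul_smodEq_smul_pow {D : Derivation C A A} {P : Module.End C A} {a : A} {n : ℕ}
    (hP : P ≡ a • D.toLinearMap ^ n [SMOD operatorsOfOrderLT D.toLinearMap n]) :
    D.toLinearMap * P ≡ a • D.toLinearMap ^ (n + 1)
      [SMOD operatorsOfOrderLT D.toLinearMap (n + 1)] := by
  have hsplit : D.toLinearMap * P - a • D.toLinearMap ^ (n + 1) =
      D.toLinearMap * (P - a • D.toLinearMap ^ n) + D a • D.toLinearMap ^ n := by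
    rw [mul_sub, derivation_mul_smul, ← pow_succ']
    abel
  rw [SModEq.sub_mem, hsplit]
  exact add_mem (derivation_mul_mem_operatorsOfOrderLT (SModEq.sub_mem.mp hP))
    (Submodule.smul_mem _ (D a) (pow_mem_operatorsOfOrderLT _ n.lt_succ_self))

theorem pow_derivation_mul_smodEq_smul_pow {D : Derivation C A A} {P : Module.End C A} {a : A}
    {n : ℕ}
    (hP : P ≡ a • D.toLinearMap ^ n [SMOD operatorsOfOrderLT D.toLinearMap n]) (m : ℕ) :
    D.toLinearMap ^ m * P ≡ a • D.toLinearMap ^ (m + n)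
      [SMOD operatorsOfOrderLT D.toLinearMap (m + n)] := by
  induction m with
  | zero => simpa using hP
  | succ m ih =>
    rw [pow_succ', mul_assoc, Nat.succ_add]
    exact derivation_mul_smodEq_smul_pow ih

theorem mul_mem_operatorsOfOrderLT_of_smodEq {D : Derivation C A A} {Q P : Module.End C A} {a : A}
    {m n : ℕ}
    (hQ : Q ∈ operatorsOfOrderLT D.toLinearMap m)
    (hP : P ≡ a • D.toLinearMap ^ n [SMOD operatorsOfOrderLT D.toLinearMap n]) :
    Q * P ∈ operatorsOfOrderLT D.toLinearMap (m + n) := by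
  induction hQ using Submodule.span_induction with
  | mem Q hQ =>
    obtain ⟨i, hi, rfl⟩ := hQ
    exact operatorsOfOrderLT_mono _ (Nat.add_lt_add_right hi n)
      (mem_operatorsOfOrderLT_succ_of_smodEq (pow_derivation_mul_smodEq_smul_pow hP i))
  | zero => simp
  | add Q₁ Q₂ _ _ hQ₁ hQ₂ => simpa only [add_mul] using add_mem hQ₁ hQ₂
  | smul b Q _ hQ => simpa only [smul_mul_assoc] using Submodule.smul_mem _ b hQ

theorem mul_smodEq_smul_pow {D : Derivation C A A} {Q P : Module.End C A} {b a : A} {m n : ℕ}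
    (hQ : Q ≡ b • D.toLinearMap ^ m [SMOD operatorsOfOrderLT D.toLinearMap m])
    (hP : P ≡ a • D.toLinearMap ^ n [SMOD operatorsOfOrderLT D.toLinearMap n]) :
    Q * P ≡ (b * a) • D.toLinearMap ^ (m + n)
      [SMOD operatorsOfOrderLT D.toLinearMap (m + n)] := by
  have hlow : Q * P ≡ (b • D.toLinearMap ^ m) * P
      [SMOD operatorsOfOrderLT D.toLinearMap (m + n)] := by
    rw [SModEq.sub_mem, ← sub_mul]
    exact mul_mem_operatorsOfOrderLT_of_smodEq (SModEq.sub_mem.mp hQ) hP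
  refine hlow.trans ?_
  rw [smul_mul_assoc, mul_smul]
  exact (pow_derivation_mul_smodEq_smul_pow hP m).smul b

theorem pow_derivation_apply_pow (D : Derivation C A A) {x : A} (hx : D x = 1) (j i : ℕ) :
    (D.toLinearMap ^ j) (x ^ i) = i.descFactorial j * x ^ (i - j) := by
  induction j with
  | zero => simp
  | succ j ih =>
    rw [pow_succ', Module.End.mul_apply, ih, ← nsmul_eq_mul, map_nsmul, Derivation.coeFn_coe,
      Derivation.leibniz_pow, hx, Nat.descFactorial_succ, ← Nat.sub_sub]
    simp only [nsmul_eq_mul, smul_eq_mul, mul_one, Nat.cast_mul]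
    ring

-- Applying a vanishing combination of the `D ^ j` to `x ^ i` kills the terms with `j > i`, so its
-- coefficients vanish one after the other, starting from the lowest order.
theorem linearIndependent_pow_derivation [IsDomain A] [CharZero A] (D : Derivation C A A) {x : A}
    (hx : D x = 1) : LinearIndependent A fun i : ℕ ↦ D.toLinearMap ^ i := by
  refine linearIndependent_iff'.mpr fun u a hsum i ↦ ?_
  induction i using Nat.strong_induction_on with
  | _ i ih =>
    intro hi
    have happly : ∑ j ∈ u, a j * (i.descFactorial j * x ^ (i - j)) = 0 := by
      simpa [pow_derivation_apply_pow D hx] using LinearMap.congr_fun hsum (x ^ i)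
    rw [Finset.sum_eq_single_of_mem i hi] at happly
    · simpa [Nat.descFactorial_self, Nat.factorial_ne_zero] using happly
    · intro j hj hji
      rcases hji.lt_or_gt with hlt | hgt
      · rw [ih j hlt hj, zero_mul]
      · simp [Nat.descFactorial_of_lt hgt]

end DifferentialOperators

theorem dvd_mul_of_algebraMap_mul_inv_mul_eq {R K : Type*} [CommRing R] [Field K] [Algebra R K]
    [FaithfulSMul R K] {p a b r : R} (hp : p ≠ 0)
    (h : algebraMap R K a * ((algebraMap R K p)⁻¹ * algebraMap R K b) = algebraMap R K r) :
    p ∣ a * b := by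
  have hinj : Function.Injective (algebraMap R K) := FaithfulSMul.algebraMap_injective R K
  have hpK : algebraMap R K p ≠ 0 := (map_ne_zero_iff _ hinj).mpr hp
  refine ⟨r, hinj ?_⟩
  rw [map_mul, map_mul, ← h]
  field_simp

theorem no_cancellation_in_contraction_ansatz_general
    {C R K : Type*} [CommSemiring C] [CommRing R] [Field K] [Algebra C K] [Algebra R K]
    [FaithfulSMul R K] {D : Derivation C K K}
    (hD : LinearIndependent K fun i : ℕ ↦ D.toLinearMap ^ i)
    {p b : R} (hp : p ≠ 0) {P : Module.End C K} {s : ℕ}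
    (hP : P ≡ algebraMap R K b • D.toLinearMap ^ s [SMOD operatorsOfOrderLT D.toLinearMap s])
    {u v : Finset ℕ} {q t : ℕ → R} (ht : ∀ i ∈ v, p ∣ t i * b → t i = 0)
    (hzero : ∑ i ∈ u, algebraMap R K (q i) • D.toLinearMap ^ i +
      (∑ i ∈ v, algebraMap R K (t i) • D.toLinearMap ^ i) * (algebraMap R K p)⁻¹ • P = 0) :
    (∀ i ∈ u, q i = 0) ∧ ∀ i ∈ v, t i = 0 := by
  have ht_zero : ∀ i ∈ v, t i = 0 := by
    by_contra! hne
    obtain ⟨m, hm, htm, hlead⟩ := exists_leading_term_sum_smul_pow D.toLinearMap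
      (a := fun i ↦ algebraMap R K (t i)) (by simpa using hne)
    have hscaled : (algebraMap R K p)⁻¹ • P ≡
        ((algebraMap R K p)⁻¹ * algebraMap R K b) • D.toLinearMap ^ s
          [SMOD operatorsOfOrderLT D.toLinearMap s] := by
      simpa only [mul_smul] using hP.smul (algebraMap R K p)⁻¹
    have hsum : ∑ i ∈ u, algebraMap R K (-q i) • D.toLinearMap ^ i =
        (∑ i ∈ v, algebraMap R K (t i) • D.toLinearMap ^ i) * (algebraMap R K p)⁻¹ • P := by
      rw [← neg_eq_of_add_eq_zero_right hzero, ← Finset.sum_neg_distrib]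
      exact Finset.sum_congr rfl fun i _ ↦ by rw [map_neg, neg_smul (M := Module.End C K)]
    have hprod := mul_smodEq_smul_pow hlead hscaled
    rw [← hsum] at hprod
    have hcoeff := coeff_eq_of_sum_smul_pow_smodEq hD hprod
    rw [← map_zero (algebraMap R K), ← apply_ite (algebraMap R K)] at hcoeff
    exact htm (by rw [ht m hm (dvd_mul_of_algebraMap_mul_inv_mul_eq hp hcoeff.symm), map_zero])
  have hq_sum : ∑ i ∈ u, algebraMap R K (q i) • D.toLinearMap ^ i = 0 := by
    rwa [Finset.sum_eq_zero (s := v) fun i hi ↦ by rw [ht_zero i hi, map_zero, zero_smul],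
      zero_mul, add_zero] at hzero
  refine ⟨fun i hi ↦ ?_, ht_zero⟩
  simpa using linearIndependent_iff'.mp hD u _ hq_sum i hi

theorem eq_zero_of_dvd_mul_of_natDegree_lt {R : Type*} [Semiring R] [NoZeroDivisors R]
    {p t b : Polynomial R} (hb : b ≠ 0) (hdeg : t.natDegree + b.natDegree < p.natDegree)
    (hdvd : p ∣ t * b) : t = 0 :=
  (mul_eq_zero.mp <| Polynomial.eq_zero_of_dvd_of_natDegree_lt hdvd <|
    Polynomial.natDegree_mul_le.trans_lt hdeg).resolve_right hb

theorem opK1_smodEq_smul_pow {C : Type*} [Field C] (D : Module.End C (K1 C)) (a : ℕ → K1 C)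
    (n : ℕ) : opK1 D a n ≡ a n • D ^ n [SMOD operatorsOfOrderLT D n] := by
  rw [opK1, Finset.range_add_one]
  exact sum_insert_smodEq_smul_pow D a fun i ↦ Finset.mem_range.mp

/-- Non-degeneracy of the ansatz `Q_0 + Q_1 ∘ ((1/p)·) ∘ P`: if `deg (lc P) < deg p`,
`Q_0` has polynomial coefficients, and the coefficients of `Q_1` have degree
`≤ deg p − deg P_s − 1`, then `Q_0 + Q_1 ∘ ((1/p)·) ∘ P = 0` forces all coefficients
of `Q_0` and `Q_1` to vanish.  Here `D` is the unique derivation of `C(x)` extending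
`d/dx` on `C[x]`. -/
theorem no_cancellation_in_contraction_ansatz
    (C : Type*) [Field C] [CharZero C]
    (D : Module.End C (K1 C))
    (hLeib : ∀ a b : K1 C, D (a * b) = a * D b + D a * b)
    (hDext : ∀ f : Polynomial C, D (embK1 f) = embK1 (Polynomial.derivative f))
    (p : Polynomial C) (hp : p ≠ 0)
    (s : ℕ) (PP : ℕ → Polynomial C) (hPPs : PP s ≠ 0)
    (hdeg : (PP s).natDegree < p.natDegree)
    (e : ℕ) (q : ℕ → Polynomial C)
    (e' : ℕ) (t : ℕ → Polynomial C)
    (ht : ∀ i ≤ e', (t i).natDegree ≤ p.natDegree - (PP s).natDegree - 1)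
    (hzero : opK1 D (fun i => embK1 (q i)) e +
      opK1 D (fun i => embK1 (t i)) e' ∘ₗ mulK1 (embK1 p)⁻¹ ∘ₗ
        opK1 D (fun i => embK1 (PP i)) s = 0) :
    (∀ i ≤ e, q i = 0) ∧ (∀ i ≤ e', t i = 0) := by
  let δ : Derivation C (K1 C) (K1 C) :=
    Derivation.mk' D fun a b ↦ by rw [hLeib, smul_eq_mul, smul_eq_mul, mul_comm (D a)]
  have hδX : δ (embK1 Polynomial.X) = 1 := (hDext Polynomial.X).trans (by simp [embK1])
  have hdvd : ∀ i ∈ Finset.range (e' + 1), p ∣ t i * PP s → t i = 0 := fun i hi ↦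
    eq_zero_of_dvd_mul_of_natDegree_lt hPPs <| by
      have := ht i (Finset.mem_range_succ_iff.mp hi)
      omega
  simpa only [Finset.mem_range_succ_iff] using no_cancellation_in_contraction_ansatz_general
    (linearIndependent_pow_derivation δ hδX) hp (opK1_smodEq_smul_pow D (fun i ↦ embK1 (PP i)) s)
    hdvd hzero

end
end
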